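/- arXiv:2112.02716 — 6 statements merged into one kernel-verified Lean document; each statement's English description precedes it below -/
import Mathlib

section
/- Let F be a division ring, n ≥ 1, and p ∈ F[z] monic of degree n. For v ∈ F^{n×1} with (C_ℓ(p), v) controllable, write 𝔓_v for the monic polynomial with {g : (vg)^ℓ(C_ℓ(p)) = 0} = 𝔓_v·F[z]. Then: (i) for every such v, C_ℓ(𝔓_v) is similar to C_ℓ(p) (i.e., 𝔓_v is similar to p); (ii) for every monic g ∈ F[z] of degree n with C_ℓ(g) similar to C_ℓ(p), there exists v ∈ F^{n×1} with (C_ℓ(p), v) controllable and 𝔓_v = g; (iii) for two vectors v, v′ with (C_ℓ(p), v) and (C_ℓ(p), v′) controllable, 𝔓_v = 𝔓_{v′} if and only if there exists an invertible T ∈ F^{n×n} with T·C_ℓ(p) = C_ℓ(p)·T and v′ = T v. -/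
/-!
Write `A` for an `n × n` matrix, `v` for a vector with `G = [v, Av, …, A^{n-1}v]` invertible.
Everything rests on one equivalence (`leftEval_eq_zero_iff`): a monic `g` of degree `n`
annihilates `v` exactly when `A G = G C_ℓ(g)`; the first `n - 1` columns of the two sides always
agree, and the last column is the annihilation condition. Since the columns of `G` are a basis of
the right `F`-space `F^n`, no nonzero polynomial of degree `< n` annihilates `v`
(`eq_zero_of_leftEval`), and some monic polynomial of degree `n` does (`exists_monic_leftEval`).
As `leftEval` turns right multiplication of polynomials into an action, division with remainder by
a monic `g` shows that the annihilator of `v` is `g F[z]` for any such `g`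
(`leftEval_eq_zero_iff_dvd`), and conversely its monic generator has degree `n`
(`natDegree_generator`).

Hence `G` conjugates `C_ℓ(p)` to `C_ℓ(𝔓_v)`; a conjugation `C_ℓ(g) = W C_ℓ(p) W⁻¹` arises from
`v = W⁻¹ e₁`, whose controllability matrix is `W⁻¹`; and vectors `v`, `v'` with the same `𝔓` are
related by `T = G' G⁻¹`.
-/

open Polynomial Matrix Finset

section Defs

variable {F : Type*} [DivisionRing F]

/-- The scalar `c` regarded as a `1 × 1` matrix. -/
noncomputable def oneByOne (c : F) : Matrix (Fin 1) (Fin 1) F := Matrix.of fun _ _ => c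

/-- Left evaluation `(v f)^{𝔢ℓ}(A) := ∑ⱼ Aʲ v fⱼ` of `f ∈ F[z]` at an input pair `(A, v)`. -/
noncomputable def leftEval {m : Type*} [Fintype m] [DecidableEq m]
    (A : Matrix m m F) (v : Matrix m (Fin 1) F) (f : F[X]) : Matrix m (Fin 1) F :=
  ∑ j ∈ Finset.range (f.natDegree + 1), A ^ j * v * oneByOne (f.coeff j)

/-- Right evaluation `(f u)^{𝔢r}(A) := ∑ⱼ fⱼ u Aʲ` of `f ∈ F[z]` at an output pair `(u, A)`. -/
noncomputable def rightEval {m : Type*} [Fintype m] [DecidableEq m]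
    (u : Matrix (Fin 1) m F) (A : Matrix m m F) (f : F[X]) : Matrix (Fin 1) m F :=
  ∑ j ∈ Finset.range (f.natDegree + 1), oneByOne (f.coeff j) * u * A ^ j

/-- Controllability matrix `[v, Av, …, A^{n-1} v]`. -/
noncomputable def ctrbMat {n : ℕ} (A : Matrix (Fin n) (Fin n) F)
    (v : Matrix (Fin n) (Fin 1) F) : Matrix (Fin n) (Fin n) F :=
  Matrix.of fun i j => (A ^ (j : ℕ) * v) i 0

/-- Observability matrix with rows `u, uA, …, u A^{n-1}`. -/
noncomputable def obsMat {n : ℕ} (u : Matrix (Fin 1) (Fin n) F)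
    (A : Matrix (Fin n) (Fin n) F) : Matrix (Fin n) (Fin n) F :=
  Matrix.of fun i j => (u * A ^ (i : ℕ)) 0 j

/-- Left companion matrix of a (monic, degree `n`) polynomial: its columns are
`e₂, …, eₙ, -(p₀, …, p_{n-1})ᵀ`. -/
noncomputable def Cl (n : ℕ) (p : F[X]) : Matrix (Fin n) (Fin n) F :=
  Matrix.of fun i j =>
    if (j : ℕ) = n - 1 then -(p.coeff (i : ℕ)) else if (i : ℕ) = (j : ℕ) + 1 then 1 else 0

/-- Right companion matrix: the transpose of the left one. -/
noncomputable def Cr (n : ℕ) (p : F[X]) : Matrix (Fin n) (Fin n) F := (Cl n p)ᵀ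

/-- First standard basis column vector of `F^{n×1}`. -/
noncomputable def e1 (F : Type*) [DivisionRing F] (n : ℕ) : Matrix (Fin n) (Fin 1) F :=
  Matrix.of fun i _ => if (i : ℕ) = 0 then 1 else 0

/-- First standard basis row vector of `F^{1×n}`. -/
noncomputable def e1row (F : Type*) [DivisionRing F] (n : ℕ) : Matrix (Fin 1) (Fin n) F :=
  Matrix.of fun _ j => if (j : ℕ) = 0 then 1 else 0

/-- Two-sided evaluation `(v f u)^{𝔢ts}(A,B) := ∑_{i+j+1 ≤ deg f} Aⁱ v f_{i+j+1} u Bʲ`. -/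
noncomputable def tsEval {n k : ℕ} (A : Matrix (Fin n) (Fin n) F) (B : Matrix (Fin k) (Fin k) F)
    (v : Matrix (Fin n) (Fin 1) F) (u : Matrix (Fin 1) (Fin k) F) (f : F[X]) :
    Matrix (Fin n) (Fin k) F :=
  ∑ i ∈ Finset.range f.natDegree, ∑ j ∈ Finset.range f.natDegree,
    A ^ i * v * oneByOne (f.coeff (i + j + 1)) * u * B ^ j

end Defs

/-! ### Left evaluation as a right-module action -/

section Aux

variable {F : Type*} [DivisionRing F] {n : ℕ}

lemma mul_oneByOne_apply {m : Type*} (x : Matrix m (Fin 1) F) (c : F) (i : m) (k : Fin 1) :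
    (x * oneByOne c) i k = x i 0 * c := by
  simp [Matrix.mul_apply, oneByOne]

lemma mul_oneByOne_mul {m : Type*} (x : Matrix m (Fin 1) F) (c d : F) :
    x * oneByOne (c * d) = x * oneByOne c * oneByOne d := by
  ext i k; simp only [mul_oneByOne_apply, mul_assoc]

lemma mul_oneByOne_add {m : Type*} (x : Matrix m (Fin 1) F) (c d : F) :
    x * oneByOne (c + d) = x * oneByOne c + x * oneByOne d := by
  ext i k; simp only [mul_oneByOne_apply, mul_add, Matrix.add_apply]

lemma mul_oneByOne_zero {m : Type*} (x : Matrix m (Fin 1) F) : x * oneByOne (0 : F) = 0 := by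
  ext i k; simp [mul_oneByOne_apply]

lemma mul_oneByOne_one {m : Type*} (x : Matrix m (Fin 1) F) : x * oneByOne (1 : F) = x := by
  ext i k; simp [mul_oneByOne_apply, Subsingleton.elim k 0]

variable (A : Matrix (Fin n) (Fin n) F) (v : Matrix (Fin n) (Fin 1) F)

lemma leftEval_eq_sum_range {f : F[X]} {N : ℕ} (h : f.natDegree < N) :
    leftEval A v f = ∑ j ∈ Finset.range N, A ^ j * v * oneByOne (f.coeff j) := by
  unfold leftEval
  refine Finset.sum_subset (Finset.range_subset_range.2 h) fun j _ hj => ?_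
  rw [coeff_eq_zero_of_natDegree_lt (by simpa using hj), mul_oneByOne_zero]

lemma leftEval_add (f g : F[X]) : leftEval A v (f + g) = leftEval A v f + leftEval A v g := by
  have h : (f + g).natDegree < max f.natDegree g.natDegree + 1 :=
    Nat.lt_succ_of_le (natDegree_add_le f g)
  rw [leftEval_eq_sum_range A v h,
    leftEval_eq_sum_range A v (f := f) (Nat.lt_succ_of_le (le_max_left _ _)),
    leftEval_eq_sum_range A v (f := g) (Nat.lt_succ_of_le (le_max_right _ _)),
    ← Finset.sum_add_distrib]
  simp only [coeff_add, mul_oneByOne_add]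

lemma leftEval_mul_monomial (f : F[X]) (k : ℕ) (c : F) :
    leftEval A v (f * monomial k c) = A ^ k * leftEval A v f * oneByOne c := by
  induction f using Polynomial.induction_on' with
  | add f g hf hg => rw [add_mul, leftEval_add, leftEval_add, hf, hg, Matrix.mul_add, Matrix.add_mul]
  | monomial m a =>
    have key : ∀ (i : ℕ) (b : F), leftEval A v (monomial i b) = A ^ i * v * oneByOne b := by
      intro i b
      rw [leftEval_eq_sum_range A v (N := i + 1)
        (Nat.lt_succ_of_le (natDegree_monomial_le b)), Finset.sum_eq_single i]
      · simp
      · intro j _ hj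
        rw [coeff_monomial_of_ne _ hj, mul_oneByOne_zero]
      · simp
    rw [monomial_mul_monomial, key, key, mul_oneByOne_mul, add_comm m k, pow_add]
    simp only [Matrix.mul_assoc]

/-- The annihilator of `v` is a right ideal. -/
lemma leftEval_mul_eq_zero {f : F[X]} (hf : leftEval A v f = 0) (h : F[X]) :
    leftEval A v (f * h) = 0 := by
  induction h using Polynomial.induction_on' with
  | add g h hg hh => rw [mul_add, leftEval_add, hg, hh, add_zero]
  | monomial m a => rw [leftEval_mul_monomial, hf, Matrix.mul_zero, Matrix.zero_mul]

lemma leftEval_conj {B T : Matrix (Fin n) (Fin n) F} (h : T * A = B * T) (f : F[X]) :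
    leftEval B (T * v) f = T * leftEval A v f := by
  have hp : ∀ j : ℕ, B ^ j * T = T * A ^ j := fun j =>
    ((SemiconjBy.pow_right (show SemiconjBy T A B from h) j).eq).symm
  simp only [leftEval, Matrix.mul_sum]
  refine Finset.sum_congr rfl fun j _ => ?_
  rw [← Matrix.mul_assoc, hp]
  simp only [Matrix.mul_assoc]

lemma ctrbMat_conj {B T : Matrix (Fin n) (Fin n) F} (h : T * A = B * T) :
    ctrbMat B (T * v) = T * ctrbMat A v := by
  have hp : ∀ j : ℕ, B ^ j * T = T * A ^ j := fun j =>
    ((SemiconjBy.pow_right (show SemiconjBy T A B from h) j).eq).symm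
  ext i j
  simp only [ctrbMat, Matrix.of_apply]
  rw [← Matrix.mul_assoc, hp, Matrix.mul_assoc, Matrix.mul_apply, Matrix.mul_apply]
  rfl

/-! ### Annihilators of vectors with invertible controllability matrix -/

/-- With `c` the coefficients of a polynomial of degree `< n`, this says that `leftEval` multiplies
the coefficient vector by the controllability matrix. -/
lemma sum_range_eq_ctrbMat_mul (c : ℕ → F) :
    ∑ j ∈ Finset.range n, A ^ j * v * oneByOne (c j) =
      ctrbMat A v * Matrix.of fun (i : Fin n) (_ : Fin 1) => c i := by
  ext i k
  rw [Matrix.sum_apply, Matrix.mul_apply, Finset.sum_range]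
  simp [mul_oneByOne_apply, ctrbMat]

variable {A v}

lemma eq_zero_of_leftEval (hG : IsUnit (ctrbMat A v)) {f : F[X]} (hd : f.degree < n)
    (hf : leftEval A v f = 0) : f = 0 := by
  by_contra hne
  have hd' : f.natDegree < n := (natDegree_lt_iff_degree_lt hne).2 hd
  rw [leftEval_eq_sum_range A v hd', sum_range_eq_ctrbMat_mul] at hf
  obtain ⟨G', -, h2⟩ := isUnit_iff_exists.1 hG
  have h := congrArg (fun M => G' * M) hf
  simp only [← Matrix.mul_assoc, h2, Matrix.one_mul, Matrix.mul_zero] at h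
  have := congrFun (congrFun h ⟨f.natDegree, hd'⟩) 0
  exact hne (leadingCoeff_eq_zero.1 (by simpa using this))

lemma leftEval_monic {g : F[X]} (hg : g.Monic) (hd : g.natDegree = n) :
    leftEval A v g =
      ctrbMat A v * (Matrix.of fun (i : Fin n) (_ : Fin 1) => g.coeff i) + A ^ n * v := by
  rw [leftEval_eq_sum_range A v (N := n + 1) (by omega), Finset.sum_range_succ,
    sum_range_eq_ctrbMat_mul]
  have : g.coeff n = 1 := hd ▸ hg.coeff_natDegree
  rw [this, mul_oneByOne_one]

lemma exists_monic_leftEval (hG : IsUnit (ctrbMat A v)) :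
    ∃ g : F[X], g.Monic ∧ g.natDegree = n ∧ leftEval A v g = 0 := by
  obtain ⟨G', h1, -⟩ := isUnit_iff_exists.1 hG
  set c : Fin n → F := fun i => -(G' * (A ^ n * v)) i 0 with hc
  set q : F[X] := ∑ i : Fin n, monomial (i : ℕ) (c i) with hq
  have hqd : q.degree < n := by
    refine (degree_sum_le _ _).trans_lt ((Finset.sup_lt_iff (WithBot.bot_lt_coe n)).2 fun i _ => ?_)
    exact (degree_monomial_le _ _).trans_lt (Nat.cast_lt.2 i.2)
  have hm : (X ^ n + q).Monic := monic_X_pow_add hqd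
  have hn : (X ^ n + q).natDegree = n := by
    rw [natDegree_add_eq_left_of_degree_lt (by rwa [degree_X_pow]), natDegree_X_pow]
  refine ⟨X ^ n + q, hm, hn, ?_⟩
  have hco : (Matrix.of fun (i : Fin n) (_ : Fin 1) => (X ^ n + q).coeff i) =
      -(G' * (A ^ n * v)) := by
    ext i k
    rw [Subsingleton.elim k 0]
    simp only [Matrix.of_apply, coeff_add, coeff_X_pow, i.2.ne, if_false, zero_add, hq,
      finsetSum_coeff, coeff_monomial]
    rw [Finset.sum_eq_single i]
    · simp [hc]
    · intro j _ hj
      simp [Fin.val_inj, hj]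
    · simp
  rw [leftEval_monic hm hn, hco, Matrix.mul_neg, ← Matrix.mul_assoc, h1, Matrix.one_mul,
    neg_add_cancel]

/-- The columns of `A G` and `G C_ℓ(g)` with index `j < n - 1` are both `A^{j+1} v`; the last ones
are `A^n v` and `-∑ᵢ Aⁱ v gᵢ`. -/
lemma leftEval_eq_zero_iff (hn : 1 ≤ n) {g : F[X]} (hg : g.Monic) (hd : g.natDegree = n) :
    leftEval A v g = 0 ↔ A * ctrbMat A v = ctrbMat A v * Cl n g := by
  have hl : ∀ i j, (A * ctrbMat A v) i j = (A ^ ((j : ℕ) + 1) * v) i 0 := by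
    intro i j
    rw [pow_succ', Matrix.mul_assoc, Matrix.mul_apply, Matrix.mul_apply]
    rfl
  have hr : ∀ i (j : Fin n), (j : ℕ) ≠ n - 1 →
      (ctrbMat A v * Cl n g) i j = (A ^ ((j : ℕ) + 1) * v) i 0 := by
    intro i j hj
    have hj' : (j : ℕ) + 1 < n := by omega
    rw [Matrix.mul_apply, Finset.sum_eq_single ⟨(j : ℕ) + 1, hj'⟩]
    · simp [Cl, hj, ctrbMat]
    · intro k _ hk
      have : (k : ℕ) ≠ j + 1 := fun h => hk (Fin.ext h)
      simp [Cl, hj, this]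
    · simp
  have hlast : ∀ i (j : Fin n), (j : ℕ) = n - 1 → (ctrbMat A v * Cl n g) i j =
      -(ctrbMat A v * (Matrix.of fun (i : Fin n) (_ : Fin 1) => g.coeff i)) i 0 := by
    intro i j hj
    simp [Matrix.mul_apply, Cl, hj]
  rw [leftEval_monic hg hd]
  constructor
  · intro h
    ext i j
    by_cases hj : (j : ℕ) = n - 1
    · rw [hl, hlast i j hj, hj, Nat.sub_add_cancel hn]
      have := congrFun (congrFun h i) 0
      rw [Matrix.add_apply] at this
      exact (neg_eq_of_add_eq_zero_right this).symm
    · rw [hl, hr i j hj]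
  · intro h
    ext i k
    rw [Subsingleton.elim k 0]
    have := congrFun (congrFun h i) ⟨n - 1, by omega⟩
    rw [hl, hlast i _ rfl] at this
    simp only [Nat.sub_add_cancel hn] at this
    rw [Matrix.add_apply, this, add_neg_cancel, Matrix.zero_apply]

lemma leftEval_eq_zero_iff_dvd (hG : IsUnit (ctrbMat A v)) {g : F[X]} (hg : g.Monic)
    (hd : g.natDegree = n) (h0 : leftEval A v g = 0) (h : F[X]) :
    leftEval A v h = 0 ↔ ∃ h' : F[X], h = g * h' := by
  constructor
  · intro hh
    have hdiv := modByMonic_add_div h g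
    refine ⟨h /ₘ g, ?_⟩
    have hr : leftEval A v (h %ₘ g) = 0 := by
      rw [← hdiv, leftEval_add, leftEval_mul_eq_zero A v h0, add_zero] at hh
      exact hh
    have hlt : (h %ₘ g).degree < n := by
      rw [← hd, ← degree_eq_natDegree hg.ne_zero]
      exact degree_modByMonic_lt h hg
    rw [eq_zero_of_leftEval hG hlt hr, zero_add] at hdiv
    exact hdiv.symm
  · rintro ⟨h', rfl⟩
    exact leftEval_mul_eq_zero A v h0 h'

/-- The degree is at most `n` by comparison with `exists_monic_leftEval`, and at least `n` by
`eq_zero_of_leftEval`. -/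
lemma natDegree_generator (hG : IsUnit (ctrbMat A v)) {P : F[X]} (hP : P.Monic)
    (h : ∀ g : F[X], leftEval A v g = 0 ↔ ∃ h : F[X], g = P * h) :
    leftEval A v P = 0 ∧ P.natDegree = n := by
  have h0 : leftEval A v P = 0 := (h P).2 ⟨1, (mul_one P).symm⟩
  refine ⟨h0, le_antisymm ?_ ?_⟩
  · obtain ⟨g, hg, hd, hg0⟩ := exists_monic_leftEval hG
    obtain ⟨q, rfl⟩ := (h g).1 hg0
    have hq : q ≠ 0 := by
      rintro rfl
      exact hg.ne_zero (mul_zero P)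
    rw [natDegree_mul hP.ne_zero hq] at hd
    omega
  · by_contra hlt
    refine hP.ne_zero (eq_zero_of_leftEval hG ?_ h0)
    exact (natDegree_lt_iff_degree_lt hP.ne_zero).1 (not_le.1 hlt)

/-! ### The standard cyclic vector of a companion matrix -/

/-- The powers of a companion matrix move `e₁` through the standard basis. -/
lemma ctrbMat_Cl_e1 (hn : 1 ≤ n) (g : F[X]) : ctrbMat (Cl n g) (e1 F n) = 1 := by
  have key : ∀ j : ℕ, ∀ hj : j < n, ∀ i : Fin n,
      (Cl n g ^ j * e1 F n) i 0 = if (i : ℕ) = j then 1 else 0 := by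
    intro j
    induction j with
    | zero => intro _ i; simp [e1]
    | succ j ih =>
      intro hj i
      have hj' : j ≠ n - 1 := by omega
      rw [pow_succ', Matrix.mul_assoc, Matrix.mul_apply,
        Finset.sum_eq_single ⟨j, by omega⟩]
      · rw [ih (by omega)]
        simp [Cl, hj']
      · intro k _ hk
        have : (k : ℕ) ≠ j := fun h => hk (Fin.ext h)
        rw [ih (by omega), if_neg this, mul_zero]
      · simp
  ext i j
  simp only [ctrbMat, Matrix.of_apply, key j j.2 i, Matrix.one_apply, Fin.ext_iff]

end Aux

/-! ### Cyclic vectors and the similarity class -/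

/-- Theorem `T:2.10u`: the map `v ↦ 𝔓_{C_ℓ(p),v}` sends cyclic vectors of
`C_ℓ(p)` onto the similarity class of `p`, and two cyclic vectors give the same minimal
polynomial iff they differ by an invertible matrix commuting with `C_ℓ(p)`. -/
theorem statement11 {F : Type*} [DivisionRing F] {n : ℕ} (hn : 1 ≤ n)
    (p : F[X]) (hp : p.Monic) (hdeg : p.natDegree = n) :
    (∀ (v : Matrix (Fin n) (Fin 1) F) (Pv : F[X]),
      IsUnit (ctrbMat (Cl n p) v) → Pv.Monic →
      (∀ g : F[X], leftEval (Cl n p) v g = 0 ↔ ∃ h : F[X], g = Pv * h) →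
      ∃ W W' : Matrix (Fin n) (Fin n) F,
        W * W' = 1 ∧ W' * W = 1 ∧ Cl n Pv = W * Cl n p * W') ∧
    (∀ g : F[X], g.Monic → g.natDegree = n →
      (∃ W W' : Matrix (Fin n) (Fin n) F,
        W * W' = 1 ∧ W' * W = 1 ∧ Cl n g = W * Cl n p * W') →
      ∃ v : Matrix (Fin n) (Fin 1) F, IsUnit (ctrbMat (Cl n p) v) ∧
        ∀ h : F[X], (leftEval (Cl n p) v h = 0 ↔ ∃ h' : F[X], h = g * h')) ∧
    (∀ (v v' : Matrix (Fin n) (Fin 1) F) (Pv Pv' : F[X]),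
      IsUnit (ctrbMat (Cl n p) v) → IsUnit (ctrbMat (Cl n p) v') →
      Pv.Monic → Pv'.Monic →
      (∀ g : F[X], leftEval (Cl n p) v g = 0 ↔ ∃ h : F[X], g = Pv * h) →
      (∀ g : F[X], leftEval (Cl n p) v' g = 0 ↔ ∃ h : F[X], g = Pv' * h) →
      (Pv = Pv' ↔ ∃ T T' : Matrix (Fin n) (Fin n) F,
        T * T' = 1 ∧ T' * T = 1 ∧ T * Cl n p = Cl n p * T ∧ v' = T * v)) := by
  refine ⟨?_, ?_, ?_⟩
  · intro v P hG hP h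
    obtain ⟨h0, hd⟩ := natDegree_generator hG hP h
    have hc := (leftEval_eq_zero_iff hn hP hd).1 h0
    obtain ⟨G', h1, h2⟩ := isUnit_iff_exists.1 hG
    refine ⟨G', ctrbMat (Cl n p) v, h2, h1, ?_⟩
    rw [mul_assoc, hc, ← mul_assoc, h2, one_mul]
  · rintro g hg hd ⟨W, W', h1, h2, hW⟩
    have hconj : W' * Cl n g = Cl n p * W' := by
      rw [hW, mul_assoc, ← mul_assoc, h2, one_mul]
    have hctrb : ctrbMat (Cl n p) (W' * e1 F n) = W' := by
      rw [ctrbMat_conj _ _ hconj, ctrbMat_Cl_e1 hn, mul_one]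
    have hG : IsUnit (ctrbMat (Cl n p) (W' * e1 F n)) := by
      rw [hctrb]
      exact isUnit_iff_exists.2 ⟨W, h2, h1⟩
    refine ⟨W' * e1 F n, hG, leftEval_eq_zero_iff_dvd hG hg hd ?_⟩
    rw [leftEval_eq_zero_iff hn hg hd, hctrb, hconj]
  · intro v v' P P' hG hG' hP hP' h h'
    obtain ⟨h0, hd⟩ := natDegree_generator hG hP h
    obtain ⟨h0', hd'⟩ := natDegree_generator hG' hP' h'
    constructor
    · rintro rfl
      have hc := (leftEval_eq_zero_iff hn hP hd).1 h0
      have hc' := (leftEval_eq_zero_iff hn hP hd).1 h0'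
      obtain ⟨K, k1, k2⟩ := isUnit_iff_exists.1 hG
      obtain ⟨K', k1', k2'⟩ := isUnit_iff_exists.1 hG'
      set G := ctrbMat (Cl n p) v with hGdef
      set G' := ctrbMat (Cl n p) v' with hGdef'
      have hK : K * Cl n p = Cl n P * K := by
        calc K * Cl n p = K * (Cl n p * G) * K := by
              rw [mul_assoc, mul_assoc, k1, mul_one]
          _ = Cl n P * K := by rw [hc, ← mul_assoc, k2, one_mul]
      refine ⟨G' * K, G * K', ?_, ?_, ?_, ?_⟩
      · rw [mul_assoc, ← mul_assoc K, k2, one_mul, k1']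
      · rw [mul_assoc, ← mul_assoc K', k2', one_mul, k1]
      · rw [mul_assoc, hK, ← mul_assoc, ← hc', mul_assoc]
      · -- `v` and `v'` are the first columns of `G` and `G'`, and `G' K G = G'`.
        have hcol : ∀ (w : Matrix (Fin n) (Fin 1) F) (i : Fin n),
            w i 0 = ctrbMat (Cl n p) w i ⟨0, hn⟩ := by
          intro w i
          simp [ctrbMat]
        have hT : G' * K * G = G' := by rw [mul_assoc, k2, mul_one]
        ext i k
        rw [Subsingleton.elim k 0, hcol v' i, ← hGdef',
          ← congrFun (congrFun hT i) ⟨0, hn⟩, Matrix.mul_apply, Matrix.mul_apply]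
        refine Finset.sum_congr rfl fun l _ => ?_
        rw [hcol v l]
    · rintro ⟨T, T', t1, t2, hT, rfl⟩
      rw [leftEval_conj _ _ hT] at h0'
      have hv : leftEval (Cl n p) v P' = 0 := by
        have := congrArg (fun M => T' * M) h0'
        simpa only [← Matrix.mul_assoc, t2, Matrix.one_mul, Matrix.mul_zero] using this
      -- `P'` is a right multiple of `P` of the same degree, both being monic.
      obtain ⟨q, hq⟩ := (h P').1 hv
      have hq1 : q.Monic := hP.of_mul_monic_left (hq ▸ hP')
      have hq0 : q.natDegree = 0 := by
        have := hP.natDegree_mul hq1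
        rw [← hq] at this
        omega
      rw [hq, hq1.natDegree_eq_zero.1 hq0, mul_one]
end

section
/- Let F be a division ring, n ≥ 1, f ∈ F[z] monic of degree n, and γ_1, …, γ_n ∈ F. Let Γ ∈ F^{n×n} be the two-diagonal matrix with Γ_{jj} = γ_j, Γ_{j+1,j} = 1, and all other entries 0. Then there exists an invertible T ∈ F^{n×n} with T C_ℓ(f) T^{−1} = Γ and T e_1 = e_1 if and only if f = ρ_{γ_1}·ρ_{γ_2}·…·ρ_{γ_n} (product taken in F[z] in this order), where ρ_α(z) := z − α. -/
/-! Two pairs `(A, v)` are compared through the left evaluation map `g ↦ ∑ⱼ Aʲ v gⱼ` from `F[z]` to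
the right `F`-space `Fⁿ`, here `evalVec A v`. It turns left multiplication by `z` into `A` and right
multiplication by a constant into right scaling, and it is carried to `evalVec B (T v)` by any `T`
with `T A = B T` (`mulVec_evalVec`).

* For `(C_ℓ(f), e₁)` it sends a polynomial of degree `< n` to its coefficient vector
  (`evalVec_Cl_of_lt`), and it kills `f` (`evalVec_Cl_self`).
* For `(Γ, e₁)` it sends the partial product `pⱼ = ρ_{γ₁} ⋯ ρ_{γⱼ}` to the basis vector `e_{j+1}`
  when `j < n`, and it kills `pₙ` (`evalVec_bidiag`), because `p_{j+1} = z pⱼ - pⱼ γ_{j+1}`.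

Given a similarity `T`, the polynomial `pₙ` is killed by the evaluation at `(C_ℓ(f), e₁)` along with
`f`; so `pₙ - f`, of degree `< n`, has zero coefficient vector. Conversely, if `f = pₙ`, take for `T`
the controllability matrix of `(Γ, e₁)`; its inverse has as columns the coefficients of
`p₀, …, p_{n-1}`. -/

open Polynomial Matrix Finset

section EvalVec

variable {F : Type*} [DivisionRing F] {n : ℕ}

/-- Left evaluation `g ↦ ∑ⱼ Aʲ v gⱼ`, with `v` and the value encoded as functions `Fin n → F` and the
coefficients acting on the right. -/
noncomputable def evalVec (A : Matrix (Fin n) (Fin n) F) (v : Fin n → F) (g : F[X]) : Fin n → F :=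
  fun i => g.sum fun j c => ((A ^ j) *ᵥ v) i * c

lemma evalVec_add (A : Matrix (Fin n) (Fin n) F) (v : Fin n → F) (g h : F[X]) :
    evalVec A v (g + h) = evalVec A v g + evalVec A v h := by
  funext i
  exact Polynomial.sum_add_index g h _ (by simp) (by intros; rw [mul_add])

lemma evalVec_monomial (A : Matrix (Fin n) (Fin n) F) (v : Fin n → F) (j : ℕ) (c : F) :
    evalVec A v (monomial j c) = fun i => ((A ^ j) *ᵥ v) i * c := by
  funext i
  exact Polynomial.sum_monomial_index c _ (by simp)

lemma evalVec_zero (A : Matrix (Fin n) (Fin n) F) (v : Fin n → F) : evalVec A v 0 = 0 := by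
  funext i
  simp [evalVec]

lemma evalVec_sub (A : Matrix (Fin n) (Fin n) F) (v : Fin n → F) (g h : F[X]) :
    evalVec A v (g - h) = evalVec A v g - evalVec A v h := by
  rw [eq_sub_iff_add_eq, ← evalVec_add, sub_add_cancel]

/-- Right scaling passes through a matrix acting on the left. -/
lemma mulVec_mul_right (A : Matrix (Fin n) (Fin n) F) (w : Fin n → F) (c : F) :
    (A *ᵥ fun i => w i * c) = fun i => (A *ᵥ w) i * c := by
  funext i
  simp [Matrix.mulVec, dotProduct, Finset.sum_mul, mul_assoc]

lemma evalVec_X_mul (A : Matrix (Fin n) (Fin n) F) (v : Fin n → F) (g : F[X]) :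
    evalVec A v (X * g) = A *ᵥ evalVec A v g := by
  induction g using Polynomial.induction_on' with
  | add p q hp hq => rw [mul_add, evalVec_add, hp, hq, evalVec_add, Matrix.mulVec_add]
  | monomial j c =>
    rw [X_mul_monomial, evalVec_monomial, evalVec_monomial, mulVec_mul_right, pow_succ',
      Matrix.mulVec_mulVec]

lemma evalVec_mul_C (A : Matrix (Fin n) (Fin n) F) (v : Fin n → F) (g : F[X]) (c : F) :
    evalVec A v (g * C c) = fun i => evalVec A v g i * c := by
  induction g using Polynomial.induction_on' with
  | add p q hp hq =>
    rw [add_mul, evalVec_add, hp, hq, evalVec_add]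
    funext i
    simp [add_mul]
  | monomial j d => rw [monomial_mul_C, evalVec_monomial, evalVec_monomial]; simp only [mul_assoc]

lemma evalVec_one (A : Matrix (Fin n) (Fin n) F) (v : Fin n → F) : evalVec A v 1 = v := by
  rw [← monomial_zero_one, evalVec_monomial]
  simp

lemma mulVec_evalVec {A B T : Matrix (Fin n) (Fin n) F} (h : T * A = B * T) (v : Fin n → F)
    (g : F[X]) : T *ᵥ evalVec A v g = evalVec B (T *ᵥ v) g := by
  have hpow : ∀ j : ℕ, T * A ^ j = B ^ j * T := fun j => (SemiconjBy.pow_right h j)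
  induction g using Polynomial.induction_on' with
  | add p q hp hq => rw [evalVec_add, evalVec_add, Matrix.mulVec_add, hp, hq]
  | monomial j c =>
    rw [evalVec_monomial, evalVec_monomial, mulVec_mul_right, Matrix.mulVec_mulVec,
      Matrix.mulVec_mulVec, hpow]

lemma evalVec_apply_of_lt (A : Matrix (Fin n) (Fin n) F) (v : Fin n → F) (g : F[X])
    (hg : g.degree < n) (i : Fin n) :
    evalVec A v g i = ∑ j : Fin n, ((A ^ (j : ℕ)) *ᵥ v) i * g.coeff j :=
  (Polynomial.sum_fin (fun j c => ((A ^ j) *ᵥ v) i * c) (by simp) hg).symm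

/-- The `k`-th standard basis vector (counting from `0`); it is the zero vector when `k ≥ n`. -/
def stdVec (F : Type*) [DivisionRing F] (n k : ℕ) : Fin n → F := fun i => if (i : ℕ) = k then 1 else 0

lemma mulVec_stdVec (A : Matrix (Fin n) (Fin n) F) (k : Fin n) :
    A *ᵥ stdVec F n k = fun i => A i k := by
  funext i
  simp [Matrix.mulVec, dotProduct, stdVec, Fin.val_inj]

lemma stdVec_self : stdVec F n n = 0 := by
  funext i
  simp [stdVec, i.2.ne]

lemma Cl_pow_mulVec (f : F[X]) (j : ℕ) (hj : j < n) :
    (Cl n f ^ j) *ᵥ stdVec F n 0 = stdVec F n j := by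
  induction j with
  | zero => simp
  | succ j ih =>
    rw [pow_succ', ← Matrix.mulVec_mulVec, ih (by omega)]
    refine (mulVec_stdVec (Cl n f) ⟨j, by omega⟩).trans ?_
    funext i
    have : j ≠ n - 1 := by omega
    simp [Cl, stdVec, this]

lemma evalVec_Cl_of_lt (f g : F[X]) (hg : g.degree < n) :
    evalVec (Cl n f) (stdVec F n 0) g = fun i : Fin n => g.coeff i := by
  funext i
  rw [evalVec_apply_of_lt _ _ _ hg]
  simp [Cl_pow_mulVec, stdVec, Fin.val_inj]

lemma evalVec_Cl_self (hn : 1 ≤ n) (f : F[X]) (hf : f.Monic) (hdeg : f.natDegree = n) :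
    evalVec (Cl n f) (stdVec F n 0) f = 0 := by
  have hd : f.degree = n := by rw [degree_eq_natDegree hf.ne_zero, hdeg]
  have hlt : (f - X ^ n).degree < (n : WithBot ℕ) := by
    rw [← hd]
    exact degree_sub_lt_left (by rw [hd, degree_X_pow]) hf.ne_zero (by simp [hf.leadingCoeff])
  have hX : evalVec (Cl n f) (stdVec F n 0) (X ^ n) = fun i : Fin n => -f.coeff i := by
    obtain ⟨m, rfl⟩ : ∃ m, n = m + 1 := ⟨n - 1, by omega⟩
    rw [← monomial_one_right_eq_X_pow, evalVec_monomial, pow_succ', ← Matrix.mulVec_mulVec,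
      Cl_pow_mulVec f m (by omega), mulVec_stdVec _ (⟨m, by omega⟩ : Fin (m + 1))]
    funext i
    simp [Cl]
  have h := evalVec_Cl_of_lt f _ hlt
  rw [evalVec_sub, hX, sub_eq_iff_eq_add] at h
  rw [h]
  funext i
  simp [coeff_X_pow, i.2.ne]

/-- The product `ρ_{γ₁} ⋯ ρ_{γⱼ}` of the first `j` linear factors (of all `n` when `j ≥ n`). -/
noncomputable def partialProd (γ : Fin n → F) (j : ℕ) : F[X] :=
  (((List.finRange n).map fun k => X - C (γ k)).take j).prod

lemma partialProd_zero (γ : Fin n → F) : partialProd γ 0 = 1 := by simp [partialProd]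

lemma partialProd_succ (γ : Fin n → F) (j : Fin n) :
    partialProd γ (j + 1) = partialProd γ j * (X - C (γ j)) := by
  unfold partialProd
  rw [List.prod_take_succ _ _ (by simp)]
  simp

lemma partialProd_self (γ : Fin n → F) :
    partialProd γ n = ((List.finRange n).map fun k => X - C (γ k)).prod := by
  unfold partialProd
  rw [List.take_of_length_le (by simp)]

lemma partialProd_monic (γ : Fin n → F) (j : ℕ) (hj : j ≤ n) :
    (partialProd γ j).Monic ∧ (partialProd γ j).natDegree = j := by
  induction j with
  | zero => simp [partialProd_zero]
  | succ j ih =>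
    obtain ⟨h1, h2⟩ := ih (by omega)
    rw [partialProd_succ γ ⟨j, hj⟩]
    refine ⟨h1.mul (monic_X_sub_C _), ?_⟩
    rw [h1.natDegree_mul (monic_X_sub_C _), h2, natDegree_X_sub_C]

lemma partialProd_degree (γ : Fin n → F) (j : ℕ) (hj : j ≤ n) : (partialProd γ j).degree = j := by
  obtain ⟨h1, h2⟩ := partialProd_monic γ j hj
  rw [degree_eq_natDegree h1.ne_zero, h2]

/-- Evaluation at `(Γ, e₁)` sends the partial products to the standard basis vectors; for `j = n` the
value is `0`. -/
lemma evalVec_bidiag (γ : Fin n → F) (Γ : Matrix (Fin n) (Fin n) F)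
    (hΓ : Γ = Matrix.of fun i j =>
      if i = j then γ j else if (i : ℕ) = (j : ℕ) + 1 then 1 else 0)
    (j : ℕ) (hj : j ≤ n) :
    evalVec Γ (stdVec F n 0) (partialProd γ j) = stdVec F n j := by
  induction j with
  | zero => rw [partialProd_zero, evalVec_one]
  | succ j ih =>
    have ih := ih (by omega)
    rw [partialProd_succ γ ⟨j, hj⟩, mul_sub, ← X_mul, evalVec_sub, evalVec_X_mul, evalVec_mul_C, ih,
      mulVec_stdVec Γ ⟨j, hj⟩]
    funext i
    subst hΓ
    by_cases h : (i : ℕ) = j <;> simp [stdVec, h, Fin.ext_iff]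

lemma mul_e1_eq_iff (T : Matrix (Fin n) (Fin n) F) :
    T * e1 F n = e1 F n ↔ T *ᵥ stdVec F n 0 = stdVec F n 0 := by
  constructor
  · intro h
    funext i
    exact congrFun (congrFun h i) 0
  · intro h
    ext i k
    exact congrFun h i

end EvalVec

/-- Proposition `T:1.16`(1): the controllable pair `(C_ℓ(f), e₁)` is
similar to `(Γ, e₁)`, `Γ` the two-diagonal matrix with diagonal `γ₁,…,γₙ`, if and only
if `f = ρ_{γ₁}·ρ_{γ₂}·⋯·ρ_{γₙ}`. -/
theorem statement12 {F : Type*} [DivisionRing F] {n : ℕ} (hn : 1 ≤ n)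
    (f : F[X]) (hf : f.Monic) (hdeg : f.natDegree = n) (γ : Fin n → F)
    (Γ : Matrix (Fin n) (Fin n) F)
    (hΓ : Γ = Matrix.of fun i j =>
      if i = j then γ j else if (i : ℕ) = (j : ℕ) + 1 then 1 else 0) :
    (∃ T T' : Matrix (Fin n) (Fin n) F,
      T * T' = 1 ∧ T' * T = 1 ∧ T * Cl n f * T' = Γ ∧ T * e1 F n = e1 F n) ↔
    f = ((List.finRange n).map fun j => X - Polynomial.C (γ j)).prod := by
  rw [← partialProd_self]
  constructor
  · rintro ⟨T, T', hTT', hT'T, hsim, he⟩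
    rw [mul_e1_eq_iff] at he
    have hcomm : T * Cl n f = Γ * T := by
      rw [← hsim, mul_assoc, hT'T, mul_one]
    have hp : evalVec (Cl n f) (stdVec F n 0) (partialProd γ n) = 0 := by
      have h := mulVec_evalVec hcomm (stdVec F n 0) (partialProd γ n)
      rw [he, evalVec_bidiag γ Γ hΓ n le_rfl, stdVec_self] at h
      rw [← Matrix.one_mulVec (evalVec _ _ _), ← hT'T, ← Matrix.mulVec_mulVec, h,
        Matrix.mulVec_zero]
    have hd : f.degree = n := by rw [degree_eq_natDegree hf.ne_zero, hdeg]
    have hlt : (f - partialProd γ n).degree < n := by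
      rw [← hd]
      refine degree_sub_lt_left (by rw [hd, partialProd_degree γ n le_rfl]) hf.ne_zero ?_
      rw [hf.leadingCoeff, (partialProd_monic γ n le_rfl).1.leadingCoeff]
    have h0 := evalVec_Cl_of_lt f _ hlt
    rw [evalVec_sub, hp, evalVec_Cl_self hn f hf hdeg, sub_zero] at h0
    rw [← sub_eq_zero]
    ext i
    rw [coeff_zero]
    by_cases hi : i < n
    · exact (congrFun h0 ⟨i, hi⟩).symm
    · exact coeff_eq_zero_of_degree_lt (hlt.trans_le (by exact_mod_cast not_lt.mp hi))
  · intro hfp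
    let T : Matrix (Fin n) (Fin n) F := Matrix.of fun i j => ((Γ ^ (j : ℕ)) *ᵥ stdVec F n 0) i
    let T' : Matrix (Fin n) (Fin n) F := Matrix.of fun i j => (partialProd γ j).coeff i
    have hT : ∀ j : ℕ, j < n → T *ᵥ stdVec F n j = (Γ ^ j) *ᵥ stdVec F n 0 := fun j hj =>
      mulVec_stdVec T ⟨j, hj⟩
    have hTT' : T * T' = 1 := by
      ext i j
      have h := congrFun (evalVec_bidiag γ Γ hΓ j j.2.le) i
      rw [evalVec_apply_of_lt _ _ _
        (by rw [partialProd_degree γ j j.2.le]; exact_mod_cast j.2)] at h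
      rw [Matrix.mul_apply, Matrix.one_apply]
      simpa [T, T', stdVec, Fin.ext_iff] using h
    have hT'T : T' * T = 1 := mul_eq_one_comm.mp hTT'
    have he : T *ᵥ stdVec F n 0 = stdVec F n 0 := by
      rw [hT 0 (by omega), pow_zero, Matrix.one_mulVec]
    -- `T` carries the coefficient vector of a polynomial of degree `< n` to its value at `(Γ, e₁)`.
    have hcoeff : ∀ g : F[X], g.degree < n →
        (T *ᵥ fun i : Fin n => g.coeff i) = evalVec Γ (stdVec F n 0) g := by
      intro g hg
      funext i
      rw [evalVec_apply_of_lt _ _ _ hg]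
      rfl
    have hcomm : T * Cl n f = Γ * T := by
      have hcol : ∀ k : Fin n,
          T *ᵥ (Cl n f *ᵥ stdVec F n k) = Γ *ᵥ (T *ᵥ stdVec F n k) := by
        intro k
        rw [hT k k.2, Matrix.mulVec_mulVec _ Γ, ← pow_succ']
        by_cases hk : (k : ℕ) + 1 < n
        · rw [← Cl_pow_mulVec f k k.2, Matrix.mulVec_mulVec _ (Cl n f), ← pow_succ',
            Cl_pow_mulVec f _ hk, hT _ hk]
        · -- The last column: `Γⁿ e₁ = -∑ᵢ Γⁱ e₁ fᵢ`, since the value of `f = pₙ` at `(Γ, e₁)` is `0`.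
          have hkn : (k : ℕ) + 1 = n := by omega
          have hd : f.degree = n := by rw [degree_eq_natDegree hf.ne_zero, hdeg]
          have hlt : (X ^ n - f).degree < (n : WithBot ℕ) := by
            rw [← degree_X_pow (R := F) n]
            exact degree_sub_lt_left (by rw [hd, degree_X_pow]) (monic_X_pow n).ne_zero
              (by simp [hf.leadingCoeff])
          have h := hcoeff _ hlt
          have hf0 : evalVec Γ (stdVec F n 0) f = 0 := by
            rw [hfp, evalVec_bidiag γ Γ hΓ n le_rfl, stdVec_self]
          rw [evalVec_sub, hf0, sub_zero, ← monomial_one_right_eq_X_pow, evalVec_monomial] at h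
          have hcl : Cl n f *ᵥ stdVec F n k =
              fun i : Fin n => (monomial n (1 : F) - f).coeff i := by
            rw [mulVec_stdVec]
            funext i
            have hk' : (k : ℕ) = n - 1 := by omega
            simp [Cl, hk', coeff_monomial, i.2.ne']
          rw [hcl, h, hkn]
          simp
      ext i k
      have h := congrFun (hcol k) i
      rw [Matrix.mulVec_mulVec, Matrix.mulVec_mulVec, mulVec_stdVec, mulVec_stdVec] at h
      exact h
    refine ⟨T, T', hTT', hT'T, ?_, (mul_e1_eq_iff T).mpr he⟩
    rw [hcomm, mul_assoc, hTT', mul_one]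
end

section
/- Let F be a division ring, and let f ∈ F[z] be monic of degree n, where n = n_1 + … + n_k with k ≥ 1 and f_1, …, f_k ∈ F[z] monic of degrees n_1, …, n_k ≥ 1. Let C := blockdiag(C_ℓ(f_1), …, C_ℓ(f_k)) ∈ F^{n×n} and E ∈ F^{n×1} the column stacking e_{1,n_1}, …, e_{1,n_k}. Then there exists an invertible T ∈ F^{n×n} with T C_ℓ(f) T^{−1} = C and T e_1 = E if and only if f·F[z] = ∩_{i=1}^k f_i·F[z], i.e., f is the least right common multiple of f_1, …, f_k. -/
/-!
For a pair `(A, v)` consider the map `ev A v : F[z] → F^{m×1}`, `g ↦ ∑ⱼ Aʲ v gⱼ`. It is a homomorphism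
of right `F[z]`-modules when `z` acts on columns by `A`, so its kernel is a right ideal, and any
`P` with `P A = B P` satisfies `P · ev A v g = ev B (P v) g` (`mul_ev`).

* The kernel of `ev (C_ℓ(p)) e₁` is `p·F[z]` (`ev_Cl_eq_zero_iff`): `p` itself is killed, while on
  polynomials of degree `< deg p` the map is the coordinate isomorphism because the controllability
  matrix of `(C_ℓ(p), e₁)` is the identity.
* Projecting onto the blocks, the kernel of `ev C E` is `⋂ᵢ fᵢ·F[z]` (`ev_block_eq_zero_iff`).

The right-hand side of the theorem therefore says that the two pairs have the same kernel. A
similarity of pairs preserves kernels. Conversely, if the kernels agree, the controllability matrix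
`T` of `(C, E)` intertwines the pairs and is injective on columns; an injective square matrix over a
division ring is invertible (`exists_inverse_of_injective`).
-/

open Polynomial Matrix Finset

section Aux

variable {F : Type*} [DivisionRing F]
variable {m m' : Type*} [Fintype m] [DecidableEq m] [Fintype m'] [DecidableEq m']

/-! ### Left evaluation as a module homomorphism -/

/-- Left evaluation `g ↦ ∑ⱼ Aʲ v gⱼ` at the pair `(A, v)` as an additive map. The coefficients act on
columns from the right, which is expressed through the scalar action of `Fᵐᵒᵖ`. -/
noncomputable def ev (A : Matrix m m F) (v : Matrix m (Fin 1) F) :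
    F[X] →+ Matrix m (Fin 1) F where
  toFun g := g.sum fun j c => MulOpposite.op c • (A ^ j * v)
  map_zero' := by simp
  map_add' g h := by
    apply Polynomial.sum_add_index
    · intro i; simp
    · intro i a b; simp [add_smul]

lemma ev_monomial (A : Matrix m m F) (v : Matrix m (Fin 1) F) (j : ℕ) (c : F) :
    ev A v (monomial j c) = MulOpposite.op c • (A ^ j * v) := by
  change ((monomial j c).sum fun j c => MulOpposite.op c • (A ^ j * v)) = _
  rw [Polynomial.sum_monomial_index]
  simp

lemma mul_ev {A : Matrix m m F} {B : Matrix m' m' F} {P : Matrix m' m F} (h : P * A = B * P)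
    (v : Matrix m (Fin 1) F) (g : F[X]) : P * ev A v g = ev B (P * v) g := by
  have hp : ∀ j : ℕ, P * A ^ j = B ^ j * P := by
    intro j
    induction j with
    | zero => simp
    | succ j ih => rw [pow_succ, ← Matrix.mul_assoc, ih, Matrix.mul_assoc, h, ← Matrix.mul_assoc,
        ← pow_succ]
  induction g using Polynomial.induction_on' with
  | add p q hp hq => rw [map_add, map_add, Matrix.mul_add, hp, hq]
  | monomial j c =>
    rw [ev_monomial, ev_monomial, Matrix.mul_smul, ← Matrix.mul_assoc, hp, Matrix.mul_assoc]

lemma ev_mul_monomial (A : Matrix m m F) (v : Matrix m (Fin 1) F) (g : F[X]) (j : ℕ) (c : F) :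
    ev A v (g * monomial j c) = MulOpposite.op c • (A ^ j * ev A v g) := by
  induction g using Polynomial.induction_on' with
  | add p q hp hq => rw [add_mul, map_add, map_add, Matrix.mul_add, smul_add, hp, hq]
  | monomial i b =>
    rw [monomial_mul_monomial, ev_monomial, ev_monomial, Matrix.mul_smul, smul_smul,
      ← Matrix.mul_assoc, ← pow_add, add_comm j i, MulOpposite.op_mul]

lemma ev_mul_eq_zero {A : Matrix m m F} {v : Matrix m (Fin 1) F} {g : F[X]}
    (hg : ev A v g = 0) (h : F[X]) : ev A v (g * h) = 0 := by
  induction h using Polynomial.induction_on' with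
  | add p q hp hq => rw [mul_add, map_add, hp, hq, add_zero]
  | monomial j c => rw [ev_mul_monomial, hg, Matrix.mul_zero, smul_zero]

/-! ### Coefficient columns and the controllability matrix -/

/-- The polynomial `∑ⱼ zʲ xⱼ` with coefficient column `x`. -/
noncomputable def colPoly {n : ℕ} (x : Matrix (Fin n) (Fin 1) F) : F[X] :=
  ∑ j : Fin n, monomial (j : ℕ) (x j 0)

lemma ev_colPoly {n : ℕ} (A : Matrix (Fin n) (Fin n) F) (v x : Matrix (Fin n) (Fin 1) F) :
    ev A v (colPoly x) = ctrbMat A v * x := by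
  rw [colPoly, map_sum]
  ext i s
  obtain rfl : s = 0 := Subsingleton.elim _ _
  rw [Matrix.mul_apply]
  simp [ev_monomial, Matrix.sum_apply, ctrbMat]

lemma colPoly_coeff {n : ℕ} {p : F[X]} (hp : p.natDegree < n) :
    colPoly (Matrix.of fun (i : Fin n) _ => p.coeff i) = p := by
  conv_rhs => rw [p.as_sum_range' n hp, Finset.sum_range]
  simp [colPoly]

lemma monic_eq_add_colPoly {n : ℕ} {p : F[X]} (hp : p.Monic) (hn : p.natDegree = n) :
    p = monomial n 1 + colPoly (Matrix.of fun (i : Fin n) _ => p.coeff i) := by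
  conv_lhs => rw [p.as_sum_range' (n + 1) (by omega), Finset.sum_range_succ, Finset.sum_range]
  have : p.coeff n = 1 := by rw [← hn]; exact hp
  simp [colPoly, this, add_comm]

lemma ctrbMat_mul_e1 {n : ℕ} (hn : 1 ≤ n) (A : Matrix (Fin n) (Fin n) F)
    (v : Matrix (Fin n) (Fin 1) F) : ctrbMat A v * e1 F n = v := by
  obtain ⟨n, rfl⟩ : ∃ k, n = k + 1 := ⟨n - 1, by omega⟩
  ext i s
  obtain rfl : s = 0 := Subsingleton.elim _ _
  rw [Matrix.mul_apply, Finset.sum_eq_single 0]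
  · simp [e1, ctrbMat]
  · intro b _ hb
    simp [e1, hb]
  · simp

/-! ### The kernel of evaluation at a companion pair -/

lemma Cl_pow_mul_e1 {n : ℕ} (p : F[X]) (j : ℕ) (hj : j < n) :
    Cl n p ^ j * e1 F n = Matrix.of fun (i : Fin n) _ => if (i : ℕ) = j then 1 else 0 := by
  induction j with
  | zero => simp [e1]
  | succ j ih =>
    rw [pow_succ', Matrix.mul_assoc, ih (by omega)]
    ext i s
    rw [Matrix.mul_apply, Finset.sum_eq_single (⟨j, by omega⟩ : Fin n)]
    · have : j ≠ n - 1 := by omega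
      simp [Cl, this]
    · intro b _ hb
      have : (b : ℕ) ≠ j := fun h => hb (Fin.ext h)
      simp [this]
    · simp

lemma ctrbMat_Cl {n : ℕ} (p : F[X]) : ctrbMat (Cl n p) (e1 F n) = 1 := by
  ext i j
  simp only [ctrbMat, Matrix.of_apply]
  rw [Cl_pow_mul_e1 p j j.2]
  simp [Matrix.one_apply, Fin.ext_iff]

lemma ev_Cl_colPoly {n : ℕ} (p : F[X]) (x : Matrix (Fin n) (Fin 1) F) :
    ev (Cl n p) (e1 F n) (colPoly x) = x := by
  rw [ev_colPoly, ctrbMat_Cl, Matrix.one_mul]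

/-- Cayley–Hamilton for the companion pair: `p` is annihilated by its own companion pair. -/
lemma ev_Cl_self {n : ℕ} (hn : 1 ≤ n) {p : F[X]} (hp : p.Monic) (hd : p.natDegree = n) :
    ev (Cl n p) (e1 F n) p = 0 := by
  conv_lhs => arg 2; rw [monic_eq_add_colPoly hp hd]
  rw [map_add, ev_Cl_colPoly, ev_monomial]
  obtain ⟨n, rfl⟩ : ∃ k, n = k + 1 := ⟨n - 1, by omega⟩
  rw [pow_succ', Matrix.mul_assoc, Cl_pow_mul_e1 p n (by omega)]
  ext i s
  have h : ∀ j : Fin (n + 1), (j : ℕ) = n ↔ j = Fin.last n := fun j => by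
    rw [Fin.ext_iff, Fin.val_last]
  simp [Matrix.mul_apply, h, Cl]

lemma ev_Cl_eq_zero_iff {n : ℕ} (hn : 1 ≤ n) {p : F[X]} (hp : p.Monic) (hd : p.natDegree = n)
    (g : F[X]) : ev (Cl n p) (e1 F n) g = 0 ↔ ∃ h : F[X], g = p * h := by
  constructor
  · intro hg
    -- `modByMonic` divides with the quotient on the right of `p`, as right ideals require.
    have hdiv := modByMonic_add_div g p
    have hr : (g %ₘ p).natDegree < n := by
      rw [← hd]
      exact natDegree_modByMonic_lt g hp (by rintro rfl; simp at hd; omega)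
    have h0 : ev (Cl n p) (e1 F n) (g %ₘ p) = 0 := by
      rw [← hdiv, map_add, ev_mul_eq_zero (ev_Cl_self hn hp hd), add_zero] at hg
      exact hg
    have h1 := ev_Cl_colPoly (n := n) p (Matrix.of fun (i : Fin n) _ => (g %ₘ p).coeff i)
    rw [colPoly_coeff hr, h0] at h1
    have h2 : g %ₘ p = 0 := by
      rw [← colPoly_coeff hr, ← h1]
      simp [colPoly]
    exact ⟨g /ₘ p, by rw [h2, zero_add] at hdiv; exact hdiv.symm⟩
  · rintro ⟨h, rfl⟩
    exact ev_mul_eq_zero (ev_Cl_self hn hp hd) h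

/-! ### The kernel of evaluation at the block-diagonal pair -/

lemma ev_block_eq_zero_iff {k : ℕ} {d : Fin k → ℕ} (hd : ∀ i, 1 ≤ d i) {fs : Fin k → F[X]}
    (hmon : ∀ i, (fs i).Monic) (hdegs : ∀ i, (fs i).natDegree = d i)
    (e : (Σ i : Fin k, Fin (d i)) ≃ m) (g : F[X]) :
    ev (Matrix.reindex e e (Matrix.blockDiagonal' fun i => Cl (d i) (fs i)))
      (Matrix.of fun idx _ => if ((e.symm idx).2 : ℕ) = 0 then (1 : F) else 0) g = 0 ↔
    ∀ i, ∃ h : F[X], g = fs i * h := by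
  set A := Matrix.reindex e e (Matrix.blockDiagonal' fun i => Cl (d i) (fs i)) with hA
  set v : Matrix m (Fin 1) F :=
    Matrix.of fun idx _ => if ((e.symm idx).2 : ℕ) = 0 then (1 : F) else 0 with hv
  -- `P i` is the projection of `F^m` onto the `i`-th block of coordinates.
  let P : ∀ i : Fin k, Matrix (Fin (d i)) m F := fun i =>
    Matrix.of fun a idx => if e ⟨i, a⟩ = idx then 1 else 0
  have hPmul : ∀ (i) (a) (x : m → F), ∑ idx, P i a idx * x idx = x (e ⟨i, a⟩) := by
    intro i a x
    simp [P]
  have hPA : ∀ i, P i * A = Cl (d i) (fs i) * P i := by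
    intro i
    ext a idx
    rw [Matrix.mul_apply, hPmul i a fun b => A b idx]
    obtain ⟨⟨i', b⟩, rfl⟩ := e.surjective idx
    by_cases h : i = i'
    · subst h
      simp [hA, P, Matrix.mul_apply, Matrix.blockDiagonal'_apply_eq]
    · simp [hA, P, Matrix.mul_apply, Matrix.blockDiagonal'_apply_ne _ _ _ h, h]
  have hPv : ∀ i, P i * v = e1 F (d i) := by
    intro i
    ext a s
    rw [Matrix.mul_apply, hPmul i a fun b => v b s]
    simp only [hv, e1, Matrix.of_apply]
    rw [e.symm_apply_apply]
  have key : ∀ i, P i * ev A v g = ev (Cl (d i) (fs i)) (e1 F (d i)) g := fun i => by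
    rw [mul_ev (hPA i), hPv]
  simp only [← ev_Cl_eq_zero_iff (hd _) (hmon _) (hdegs _), ← key]
  constructor
  · intro h i
    rw [h, Matrix.mul_zero]
  · intro h
    ext idx s
    obtain ⟨⟨i, b⟩, rfl⟩ := e.surjective idx
    rw [← hPmul i b fun c => ev A v g c s, ← Matrix.mul_apply, h i]
    rfl

/-! ### Invertibility and intertwining of the controllability matrix -/

/-- Over a division ring, `x ↦ T x` is linear for the right action of scalars, that is, over `Fᵐᵒᵖ`,
so injectivity on columns gives surjectivity by finite-dimensionality. -/
lemma exists_inverse_of_injective {T : Matrix m m F}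
    (hT : ∀ x : Matrix m (Fin 1) F, T * x = 0 → x = 0) :
    ∃ T' : Matrix m m F, T * T' = 1 ∧ T' * T = 1 := by
  have hv : ∀ x : m → F, T *ᵥ x = 0 → x = 0 := by
    intro x hx
    have := hT (Matrix.of fun i _ => x i) (by
      ext i s
      exact congrFun hx i)
    funext i
    exact congrFun (congrFun this i) 0
  let L : (m → F) →ₗ[Fᵐᵒᵖ] (m → F) :=
    { toFun := fun x => T *ᵥ x
      map_add' := fun x y => Matrix.mulVec_add T x y
      map_smul' := fun c x => Matrix.mulVec_smul T c x }
  have : Module.Finite Fᵐᵒᵖ F :=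
    ⟨⟨{1}, by
      rw [eq_top_iff]
      intro x _
      rw [Finset.coe_singleton, Submodule.mem_span_singleton]
      exact ⟨MulOpposite.op x, by simp⟩⟩⟩
  have hinj : Function.Injective L := by
    rw [injective_iff_map_eq_zero]
    exact hv
  have hsurj := LinearMap.surjective_of_injective hinj
  choose S hS using fun j : m => hsurj (fun i => if i = j then 1 else 0)
  have h1 : T * (Matrix.of fun i j => S j i) = 1 := by
    ext i j
    rw [Matrix.one_apply]
    exact congrFun (hS j) i
  refine ⟨_, h1, ?_⟩
  -- A right inverse of an injective map is also a left inverse: `T (T' T - 1) = 0`, column by column.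
  generalize (Matrix.of fun i j => S j i) = T' at h1
  have h2 : T * (T' * T - 1) = 0 := by
    rw [Matrix.mul_sub, ← Matrix.mul_assoc, h1, Matrix.one_mul, Matrix.mul_one, sub_self]
  rw [← sub_eq_zero]
  ext i j
  have := hv (fun i => (T' * T - 1) i j) (by
    funext i
    exact congrFun (congrFun h2 i) j)
  exact congrFun this i

/-- If `p` is annihilated by the pair `(A, v)` and `deg p` is the size of `A`, the controllability
matrix intertwines the companion matrix with `A`; the last column is the relation
`Aⁿ v = -∑ⱼ Aʲ v pⱼ`. -/
lemma ctrbMat_mul_Cl {n : ℕ} {p : F[X]} (hp : p.Monic) (hd : p.natDegree = n)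
    {A : Matrix (Fin n) (Fin n) F} {v : Matrix (Fin n) (Fin 1) F} (h : ev A v p = 0) :
    ctrbMat A v * Cl n p = A * ctrbMat A v := by
  have hlast : ∀ i, (A ^ n * v) i 0 + ∑ j : Fin n, ctrbMat A v i j * p.coeff j = 0 := by
    intro i
    rw [monic_eq_add_colPoly hp hd, map_add, ev_monomial, ev_colPoly] at h
    have := congrFun (congrFun h i) 0
    simpa [Matrix.mul_apply (M := ctrbMat A v)] using this
  ext i j
  have hr : (A * ctrbMat A v) i j = (A ^ ((j : ℕ) + 1) * v) i 0 := by
    rw [pow_succ', Matrix.mul_assoc]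
    simp only [Matrix.mul_apply (M := A), ctrbMat, Matrix.of_apply]
  rw [hr]
  by_cases hj : (j : ℕ) = n - 1
  · have hj' : (j : ℕ) + 1 = n := by have := j.2; omega
    rw [hj', eq_neg_of_add_eq_zero_left (hlast i), Matrix.mul_apply]
    simp [Cl, hj]
  · rw [Matrix.mul_apply, Finset.sum_eq_single (⟨j + 1, by have := j.2; omega⟩ : Fin n)]
    · simp [Cl, hj, ctrbMat]
    · intro b _ hb
      have : (b : ℕ) ≠ j + 1 := fun h => hb (Fin.ext h)
      simp [Cl, hj, this]
    · simp

end Aux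

/-- Proposition `T:1.16`(3): the controllable pair `(C_ℓ(f), e₁)` is
similar to the block-diagonal pair `(C_ℓ(f₁,…,f_k), E)` (realised up to the reindexing
bijection `e`) if and only if `f·F[z] = ∩ᵢ fᵢ·F[z]`, i.e. `f = lrcm(f₁,…,f_k)`. -/
theorem statement13 {F : Type*} [DivisionRing F] {k : ℕ} (hk : 1 ≤ k) (d : Fin k → ℕ)
    (hd : ∀ i, 1 ≤ d i) (fs : Fin k → F[X]) (hmon : ∀ i, (fs i).Monic)
    (hdegs : ∀ i, (fs i).natDegree = d i)
    (f : F[X]) (hf : f.Monic) (hdeg : f.natDegree = ∑ i, d i)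
    (e : (Σ i : Fin k, Fin (d i)) ≃ Fin (∑ i, d i))
    (C : Matrix (Fin (∑ i, d i)) (Fin (∑ i, d i)) F)
    (hC : C = Matrix.reindex e e (Matrix.blockDiagonal' fun i => Cl (d i) (fs i)))
    (E : Matrix (Fin (∑ i, d i)) (Fin 1) F)
    (hE : E = Matrix.of fun idx _ => if ((e.symm idx).2 : ℕ) = 0 then (1 : F) else 0) :
    (∃ T T' : Matrix (Fin (∑ i, d i)) (Fin (∑ i, d i)) F,
      T * T' = 1 ∧ T' * T = 1 ∧ T * Cl (∑ i, d i) f * T' = C ∧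
        T * e1 F (∑ i, d i) = E) ↔
    (∀ g : F[X], (∃ h : F[X], g = f * h) ↔ ∀ i, ∃ h : F[X], g = fs i * h) := by
  have hn : 1 ≤ ∑ i, d i :=
    (hd ⟨0, hk⟩).trans (Finset.single_le_sum (fun _ _ => Nat.zero_le _) (Finset.mem_univ _))
  have hker : ∀ g, ev C E g = 0 ↔ ∀ i, ∃ h : F[X], g = fs i * h := by
    subst hC hE
    exact ev_block_eq_zero_iff hd hmon hdegs e
  simp only [← hker, ← ev_Cl_eq_zero_iff hn hf hdeg]
  constructor
  · rintro ⟨T, T', h1, h2, h3, h4⟩ g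
    have hTC : T * Cl (∑ i, d i) f = C * T := by
      rw [← h3, Matrix.mul_assoc _ T' T, h2, Matrix.mul_one]
    have hev := mul_ev hTC (e1 F (∑ i, d i)) g
    rw [h4] at hev
    constructor
    · intro h
      rw [← hev, h, Matrix.mul_zero]
    · intro h
      rw [← Matrix.one_mul (ev _ _ g), ← h2, Matrix.mul_assoc, hev, h, Matrix.mul_zero]
  · intro h
    have hTC := ctrbMat_mul_Cl hf hdeg ((h f).1 (ev_Cl_self hn hf hdeg))
    obtain ⟨T', h1, h2⟩ := exists_inverse_of_injective (T := ctrbMat C E) (fun x hx => by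
      rw [← ev_colPoly, ← h, ev_Cl_colPoly] at hx
      exact hx)
    exact ⟨ctrbMat C E, T', h1, h2, by rw [hTC, Matrix.mul_assoc, h1, Matrix.mul_one],
      ctrbMat_mul_e1 hn C E⟩
end

section
/- Let F be a division ring, k ≥ 1, B ∈ F^{k×k} and u ∈ F^{1×k}. Then the pair (u, B) is observable if and only if for every d ∈ F^{1×k} there exists f ∈ F[z] with (fu)^r(B) = d. Moreover, if (u, B) is observable and d ∈ F^{1×k}, let q be the monic polynomial with {g : (gu)^r(B) = 0} = F[z]·q and let f_r(z) := Σ_{m=0}^{k−1} c_m z^m where (c_0, …, c_{k−1}) := d·𝔬_{u,B}^{−1}. Then f_r is the unique polynomial of degree < k with (f_r u)^r(B) = d, and a polynomial f ∈ F[z] satisfies (fu)^r(B) = d if and only if f = f_r + h·q for some h ∈ F[z]. -/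
/-!
Right evaluation at `(u, B)` is additive in the polynomial, and on polynomials of degree `< k` it
is multiplication of the row of coefficients by the observability matrix.  When that matrix is
invertible, interpolation by polynomials of degree `< k` is therefore uniquely solvable, and
any two solutions differ by an element of the kernel `F[z] q` (`rightEval_eq_coeffRow_mul`,
`rightEval_sub`).

Conversely, let `Wᵢ` be the left span of `u, uB, …, uB^{i-1}`.  If `uBⁱ ∈ Wᵢ`, then `Wᵢ` is stable
under right multiplication by `B`, so it contains every value of right evaluation; when right
evaluation is onto, this forces `Wᵢ = ⊤`.  Hence the dimensions of the `Wᵢ` increase strictly until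
`⊤` is reached, so `W_k = ⊤` and the observability matrix has a left inverse.  Left inverses of
square matrices over a division ring are two-sided.
-/

open Polynomial Matrix Finset

lemma oneByOne_mul {F : Type*} [DivisionRing F] {k : ℕ} (c : F) (M : Matrix (Fin 1) (Fin k) F) :
    oneByOne c * M = c • M := by
  ext i j
  fin_cases i
  simp [oneByOne, Matrix.mul_apply]

/-- The sum in `rightEval` may be taken over any initial range that contains the support of `f`. -/
lemma rightEval_eq_sum_range {F : Type*} [DivisionRing F] {k : ℕ} (B : Matrix (Fin k) (Fin k) F)
    (u : Matrix (Fin 1) (Fin k) F) (f : F[X]) {n : ℕ} (hn : ∀ j, n ≤ j → f.coeff j = 0) :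
    rightEval u B f = ∑ j ∈ Finset.range n, f.coeff j • (u * B ^ j) := by
  simp only [rightEval, oneByOne_mul, Matrix.smul_mul]
  rcases le_total n (f.natDegree + 1) with h | h
  · symm
    apply Finset.sum_subset (Finset.range_subset_range.2 h)
    intro j _ hj
    rw [hn j (by simpa using hj), zero_smul]
  · apply Finset.sum_subset (Finset.range_subset_range.2 h)
    intro j _ hj
    rw [f.coeff_eq_zero_of_natDegree_lt (not_lt.1 (Finset.mem_range.not.1 hj)), zero_smul]

lemma rightEval_sub {F : Type*} [DivisionRing F] {k : ℕ} (B : Matrix (Fin k) (Fin k) F)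
    (u : Matrix (Fin 1) (Fin k) F) (f g : F[X]) :
    rightEval u B (f - g) = rightEval u B f - rightEval u B g := by
  have hf : ∀ j, f.natDegree + g.natDegree + 1 ≤ j → f.coeff j = 0 := fun j hj =>
    f.coeff_eq_zero_of_natDegree_lt (by omega)
  have hg : ∀ j, f.natDegree + g.natDegree + 1 ≤ j → g.coeff j = 0 := fun j hj =>
    g.coeff_eq_zero_of_natDegree_lt (by omega)
  rw [rightEval_eq_sum_range B u f hf, rightEval_eq_sum_range B u g hg,
    rightEval_eq_sum_range B u (f - g)
      (n := f.natDegree + g.natDegree + 1) (fun j hj => by simp [hf j hj, hg j hj]),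
    ← Finset.sum_sub_distrib]
  simp [sub_smul]

/-- The row `(f₀, …, f_{k-1})` of the first `k` coefficients of `f`. -/
noncomputable def coeffRow {F : Type*} [DivisionRing F] (k : ℕ) (f : F[X]) :
    Matrix (Fin 1) (Fin k) F :=
  Matrix.of fun _ m => f.coeff m

lemma mul_obsMat {F : Type*} [DivisionRing F] {k : ℕ} (B : Matrix (Fin k) (Fin k) F)
    (u c : Matrix (Fin 1) (Fin k) F) :
    c * obsMat u B = ∑ m : Fin k, c 0 m • (u * B ^ (m : ℕ)) := by
  ext i j
  fin_cases i
  rw [Matrix.mul_apply, Matrix.sum_apply]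
  simp [obsMat]

lemma rightEval_eq_coeffRow_mul {F : Type*} [DivisionRing F] {k : ℕ}
    (B : Matrix (Fin k) (Fin k) F) (u : Matrix (Fin 1) (Fin k) F) (f : F[X])
    (hf : f.degree < (k : WithBot ℕ)) :
    rightEval u B f = coeffRow k f * obsMat u B := by
  rw [mul_obsMat, rightEval_eq_sum_range B u f ((degree_lt_iff_coeff_zero f k).1 hf),
    Finset.sum_range]
  rfl

/-- The polynomial whose first `k` coefficients are the entries of the row `c`. -/
noncomputable def rowPoly {F : Type*} [DivisionRing F] {k : ℕ} (c : Matrix (Fin 1) (Fin k) F) :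
    F[X] :=
  ∑ m : Fin k, Polynomial.C (c 0 m) * X ^ (m : ℕ)

lemma rowPoly_degree_lt {F : Type*} [DivisionRing F] {k : ℕ} (c : Matrix (Fin 1) (Fin k) F) :
    (rowPoly c).degree < (k : WithBot ℕ) :=
  Polynomial.degree_sum_fin_lt _

lemma coeffRow_rowPoly {F : Type*} [DivisionRing F] {k : ℕ} (c : Matrix (Fin 1) (Fin k) F) :
    coeffRow k (rowPoly c) = c := by
  ext i j
  fin_cases i
  simp [coeffRow, rowPoly, Polynomial.finsetSum_coeff, Polynomial.coeff_C_mul,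
    Polynomial.coeff_X_pow, Fin.val_inj]

lemma rightEval_rowPoly {F : Type*} [DivisionRing F] {k : ℕ} (B : Matrix (Fin k) (Fin k) F)
    (u c : Matrix (Fin 1) (Fin k) F) : rightEval u B (rowPoly c) = c * obsMat u B := by
  rw [rightEval_eq_coeffRow_mul B u _ (rowPoly_degree_lt c), coeffRow_rowPoly]

/-- The left `F`-span of `u, uB, …, uB^{i-1}`. -/
def krylov {F : Type*} [DivisionRing F] {k : ℕ} (B : Matrix (Fin k) (Fin k) F)
    (u : Matrix (Fin 1) (Fin k) F) (i : ℕ) : Submodule F (Matrix (Fin 1) (Fin k) F) :=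
  Submodule.span F ((fun j => u * B ^ j) '' Set.Iio i)

lemma krylov_mono {F : Type*} [DivisionRing F] {k : ℕ} (B : Matrix (Fin k) (Fin k) F)
    (u : Matrix (Fin 1) (Fin k) F) {i j : ℕ} (h : i ≤ j) : krylov B u i ≤ krylov B u j :=
  Submodule.span_mono (Set.image_mono (Set.Iio_subset_Iio h))

lemma mem_krylov {F : Type*} [DivisionRing F] {k : ℕ} (B : Matrix (Fin k) (Fin k) F)
    (u : Matrix (Fin 1) (Fin k) F) {i j : ℕ} (h : j < i) : u * B ^ j ∈ krylov B u i :=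
  Submodule.subset_span ⟨j, h, rfl⟩

lemma krylov_mul_mem {F : Type*} [DivisionRing F] {k : ℕ} {B : Matrix (Fin k) (Fin k) F}
    {u : Matrix (Fin 1) (Fin k) F} {i : ℕ} (h : u * B ^ i ∈ krylov B u i)
    {x : Matrix (Fin 1) (Fin k) F} (hx : x ∈ krylov B u i) : x * B ∈ krylov B u i := by
  induction hx using Submodule.span_induction with
  | mem x hx =>
    obtain ⟨j, hj, rfl⟩ := hx
    simp only [Matrix.mul_assoc, ← pow_succ]
    rcases (Nat.succ_le_of_lt hj).lt_or_eq with h' | h'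
    · exact mem_krylov B u h'
    · rw [← Nat.succ_eq_add_one, h']
      exact h
  | zero => simp
  | add x y _ _ hx hy => rw [Matrix.add_mul]; exact add_mem hx hy
  | smul a x _ hx => rw [Matrix.smul_mul]; exact Submodule.smul_mem _ a hx

/-- The chain of Krylov spaces can only stall at the whole space when right evaluation is onto: a
space at which it stalls is `B`-stable and so contains every value of right evaluation. -/
lemma krylov_eq_top {F : Type*} [DivisionRing F] {k : ℕ} {B : Matrix (Fin k) (Fin k) F}
    {u : Matrix (Fin 1) (Fin k) F} (hs : ∀ d, ∃ f : F[X], rightEval u B f = d) {i : ℕ}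
    (h : u * B ^ i ∈ krylov B u i) : krylov B u i = ⊤ := by
  -- `u` itself lies in `krylov B u i`: trivially if `0 < i`, and by `h` if `i = 0`.
  have hu : u ∈ krylov B u i := by
    rcases i.eq_zero_or_pos with rfl | hi
    · simpa using h
    · simpa using mem_krylov B u hi
  have hp : ∀ n, u * B ^ n ∈ krylov B u i := by
    intro n
    induction n with
    | zero => simpa using hu
    | succ n ih => rw [pow_succ, ← Matrix.mul_assoc]; exact krylov_mul_mem h ih
  rw [eq_top_iff]
  rintro d -
  obtain ⟨f, rfl⟩ := hs d
  rw [rightEval_eq_sum_range B u f (n := f.natDegree + 1)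
    (fun j hj => f.coeff_eq_zero_of_natDegree_lt hj)]
  exact Submodule.sum_mem _ fun j _ => Submodule.smul_mem _ _ (hp j)

/-- As long as the Krylov spaces are proper, each step raises the dimension by at least one. -/
lemma krylov_finrank {F : Type*} [DivisionRing F] {k : ℕ} {B : Matrix (Fin k) (Fin k) F}
    {u : Matrix (Fin 1) (Fin k) F} (hs : ∀ d, ∃ f : F[X], rightEval u B f = d) (i : ℕ) :
    krylov B u i = ⊤ ∨ i ≤ Module.finrank F (krylov B u i) := by
  induction i with
  | zero => right; exact Nat.zero_le _
  | succ i ih =>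
    by_cases ht : krylov B u i = ⊤
    · left
      exact top_le_iff.1 (ht ▸ krylov_mono B u i.le_succ)
    · right
      have hlt : krylov B u i < krylov B u (i + 1) :=
        lt_of_le_of_ne (krylov_mono B u i.le_succ) fun he =>
          ht (krylov_eq_top hs (he ▸ mem_krylov B u i.lt_succ_self))
      exact (Nat.succ_le_succ (ih.resolve_left ht)).trans
        (Nat.succ_le_of_lt (Submodule.finrank_lt_finrank_of_lt hlt))

lemma isUnit_obsMat_of_surjective {F : Type*} [DivisionRing F] {k : ℕ}
    {B : Matrix (Fin k) (Fin k) F} {u : Matrix (Fin 1) (Fin k) F}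
    (hs : ∀ d, ∃ f : F[X], rightEval u B f = d) : IsUnit (obsMat u B) := by
  have htop : krylov B u k = ⊤ := by
    rcases krylov_finrank hs k with h | h
    · exact h
    · apply Submodule.eq_top_of_finrank_eq
      apply le_antisymm (Submodule.finrank_le _)
      simpa [Module.finrank_matrix] using h
  have hc : ∀ d : Matrix (Fin 1) (Fin k) F, ∃ c : Matrix (Fin 1) (Fin k) F,
      c * obsMat u B = d := by
    intro d
    have hd : d ∈ krylov B u k := htop ▸ Submodule.mem_top
    induction hd using Submodule.span_induction with
    | mem x hx =>
      obtain ⟨j, hj, rfl⟩ := hx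
      refine ⟨Matrix.of fun _ m => if m = ⟨j, hj⟩ then 1 else 0, ?_⟩
      simp [mul_obsMat, ite_smul]
    | zero => exact ⟨0, by simp⟩
    | add x y _ _ hx hy =>
      obtain ⟨a, rfl⟩ := hx
      obtain ⟨b, rfl⟩ := hy
      exact ⟨a + b, Matrix.add_mul _ _ _⟩
    | smul a x _ hx =>
      obtain ⟨b, rfl⟩ := hx
      exact ⟨a • b, Matrix.smul_mul _ _ _⟩
  choose c hc using hc
  -- Solving for each row of the identity gives the rows of a left inverse.
  let P : Matrix (Fin k) (Fin k) F :=
    Matrix.of fun i m => c (Matrix.of fun _ j => (1 : Matrix (Fin k) (Fin k) F) i j) 0 m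
  have hP : P * obsMat u B = 1 := by
    ext i j
    have := congrFun (congrFun (hc (Matrix.of fun _ j => (1 : Matrix (Fin k) (Fin k) F) i j)) 0) j
    simpa [P, Matrix.mul_apply] using this
  exact ⟨⟨obsMat u B, P, mul_eq_one_symm hP, hP⟩, rfl⟩

/-- Theorem `R:1.0c`: `(u, B)` is observable iff the right interpolation
problem `(fu)^r(B) = d` is solvable for every `d`; in the observable case the low-degree
solution is `f_r(z) = d·𝔬_{u,B}⁻¹·𝔄_k(z)ᵀ`, it is the unique solution of degree `< k`,
and the full solution set is `f_r + F[z]·q` where `q` is the minimal polynomial of the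
pair. -/
theorem statement15 {F : Type*} [DivisionRing F] {k : ℕ} (hk : 1 ≤ k)
    (B : Matrix (Fin k) (Fin k) F) (u : Matrix (Fin 1) (Fin k) F) :
    (IsUnit (obsMat u B) ↔
      ∀ d : Matrix (Fin 1) (Fin k) F, ∃ f : F[X], rightEval u B f = d) ∧
    (∀ O' : Matrix (Fin k) (Fin k) F,
      obsMat u B * O' = 1 → O' * obsMat u B = 1 →
      ∀ (d : Matrix (Fin 1) (Fin k) F) (q : F[X]), q.Monic →
      (∀ g : F[X], rightEval u B g = 0 ↔ ∃ h : F[X], g = h * q) →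
      ∀ fr : F[X], fr = ∑ m : Fin k, Polynomial.C ((d * O') 0 m) * X ^ (m : ℕ) →
      (fr.degree < (k : WithBot ℕ) ∧ rightEval u B fr = d ∧
        (∀ f' : F[X], f'.degree < (k : WithBot ℕ) → rightEval u B f' = d → f' = fr) ∧
        (∀ f : F[X], rightEval u B f = d ↔ ∃ h : F[X], f = fr + h * q))) := by
  refine ⟨⟨?_, isUnit_obsMat_of_surjective⟩, ?_⟩
  · rintro ⟨U, hU⟩ d
    refine ⟨rowPoly (d * (↑U⁻¹ : Matrix (Fin k) (Fin k) F)), ?_⟩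
    rw [rightEval_rowPoly, ← hU, Matrix.mul_assoc, Units.inv_mul, Matrix.mul_one]
  · intro O' h1 h2 d q _ hq fr hfr
    replace hfr : fr = rowPoly (d * O') := hfr
    have hd : rightEval u B fr = d := by
      rw [hfr, rightEval_rowPoly, Matrix.mul_assoc, h2, Matrix.mul_one]
    refine ⟨hfr ▸ rowPoly_degree_lt _, hd, ?_, ?_⟩
    · intro f' hf' he
      have hrow : coeffRow k f' = d * O' := by
        rw [← he, rightEval_eq_coeffRow_mul B u f' hf', Matrix.mul_assoc, h1, Matrix.mul_one]
      rw [hfr, ← hrow]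
      ext n
      rcases lt_or_ge n k with hn | hn
      · exact (congrFun (congrFun (coeffRow_rowPoly (coeffRow k f')) 0) ⟨n, hn⟩).symm
      · rw [(degree_lt_iff_coeff_zero _ _).1 hf' n hn,
          (degree_lt_iff_coeff_zero _ _).1 (rowPoly_degree_lt _) n hn]
    · intro f
      rw [← sub_eq_zero, ← hd, ← rightEval_sub, hq]
      simp only [sub_eq_iff_eq_add']
end

section
/- Let F be a division ring, A ∈ F^{n×n}, B ∈ F^{k×k}, v ∈ F^{n×1}, u ∈ F^{1×k}, and f ∈ F[z]. Then the two-sided evaluation satisfies the Sylvester identity A·(vfu)^{ts}(A,B) − (vfu)^{ts}(A,B)·B = (vf)^ℓ(A)·u − v·(fu)^r(B). In particular, if (vf)^ℓ(A) = b and (fu)^r(B) = d, then Y := (vfu)^{ts}(A,B) solves the Sylvester equation AY − YB = b·u − v·d. -/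
/-!
With `g i j = Aⁱ v f_{i+j} u Bʲ`, multiplying the two-sided evaluation by `A` on the left shifts the
first index of `g`, and multiplying by `B` on the right shifts the second one. The left and right
evaluations are the sums over the column `j = 0` and the row `i = 0`. Since `g i j = 0` for
`i + j > deg f`, the identity is the combinatorial fact `sum_shift_sub_sum_shift` about double sums
supported in a triangle.
-/

open Polynomial Matrix Finset

/-- Splitting the square sum `S = ∑_{i,j ≤ N} g i j` along its row `i = 0` and along its column
`j = 0` gives two expressions for `S`; equating them yields the identity. The last column
(respectively row) of what remains vanishes because it lies beyond the antidiagonal `i + j = N`. -/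
theorem sum_shift_sub_sum_shift {M : Type*} [AddCommGroup M] (N : ℕ) (g : ℕ → ℕ → M)
    (hg : ∀ i j, N < i + j → g i j = 0) :
    (∑ i ∈ Finset.range N, ∑ j ∈ Finset.range N, g (i + 1) j) -
      (∑ i ∈ Finset.range N, ∑ j ∈ Finset.range N, g i (j + 1)) =
    (∑ i ∈ Finset.range (N + 1), g i 0) - ∑ j ∈ Finset.range (N + 1), g 0 j := by
  have h_row : ∀ h : ℕ → ℕ → M, (∀ i j, N < i + j → h i j = 0) →
      ∑ i ∈ Finset.range (N + 1), ∑ j ∈ Finset.range (N + 1), h i j =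
      (∑ i ∈ Finset.range N, ∑ j ∈ Finset.range N, h (i + 1) j) +
        ∑ j ∈ Finset.range (N + 1), h 0 j := by
    intro h hh
    rw [Finset.sum_range_succ']
    congr 1
    refine Finset.sum_congr rfl fun i _ => ?_
    rw [Finset.sum_range_succ, hh (i + 1) N (by omega), add_zero]
  have h1 := h_row g hg
  have h2 := h_row (fun i j => g j i) fun i j hij => hg j i (by omega)
  rw [Finset.sum_comm, h1, Finset.sum_comm (s := Finset.range N) (t := Finset.range N)
    (f := fun i j => g j (i + 1))] at h2
  rw [sub_eq_sub_iff_add_eq_add, h2, add_comm]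

/-- Proposition `R:klj` and Corollary `C:5.2`: the two-sided evaluation
satisfies the Sylvester identity
`A·(vfu)^{ts}(A,B) − (vfu)^{ts}(A,B)·B = (vf)^ℓ(A)·u − v·(fu)^r(B)`; in particular, if
`(vf)^ℓ(A) = b` and `(fu)^r(B) = d`, then `Y = (vfu)^{ts}(A,B)` solves
`AY − YB = b·u − v·d`. -/
theorem statement16 {F : Type*} [DivisionRing F] {n k : ℕ}
    (A : Matrix (Fin n) (Fin n) F) (B : Matrix (Fin k) (Fin k) F)
    (v : Matrix (Fin n) (Fin 1) F) (u : Matrix (Fin 1) (Fin k) F) (f : F[X]) :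
    (A * tsEval A B v u f - tsEval A B v u f * B =
      leftEval A v f * u - v * rightEval u B f) ∧
    (∀ (b : Matrix (Fin n) (Fin 1) F) (d : Matrix (Fin 1) (Fin k) F),
      leftEval A v f = b → rightEval u B f = d →
      A * tsEval A B v u f - tsEval A B v u f * B = b * u - v * d) := by
  have main : A * tsEval A B v u f - tsEval A B v u f * B =
      leftEval A v f * u - v * rightEval u B f := by
    have key := sum_shift_sub_sum_shift f.natDegree
      (fun i j => A ^ i * v * oneByOne (f.coeff (i + j)) * u * B ^ j) (by
        intro i j hij
        have h0 : oneByOne (f.coeff (i + j)) = 0 := by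
          ext a b
          simp [oneByOne, Polynomial.coeff_eq_zero_of_natDegree_lt hij]
        simp [h0])
    -- Both `B ^ (j + 1)` and `B * B ^ j` are normalized to `B ^ j * B`.
    simp only [tsEval, leftEval, rightEval, Matrix.mul_sum, Matrix.sum_mul]
    simpa only [pow_succ', pow_zero, Matrix.mul_one, Matrix.one_mul, Matrix.mul_assoc, add_zero,
      zero_add, add_assoc, add_comm 1,
      (Commute.pow_self B _).eq.symm] using key
  refine ⟨main, ?_⟩
  rintro b d rfl rfl
  exact main
end

section
/- Let F be a division ring and let p, q ∈ F[z] be monic of degrees n ≥ 1 and k ≥ 1 respectively. For f ∈ F[z] set Υ^f := (e_{1,n} f e_{1,k}^T)^{ts}(C_ℓ(p), C_r(q)) ∈ F^{n×k}. Then Υ^f = 0 if and only if there exist α ∈ F and h ∈ F[z] such that f = α + p·h·q. -/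
/-!
The two-sided evaluation is the divided difference `(f(x) - f(y)) / (x - y)` evaluated with
`x ↦ A` on the left and `y ↦ B` on the right.

In the backward direction, `tsEval_X_mul` is the product rule
`x f(x) - y f(y) = (x - y) f(y) + x (f(x) - f(y))`.  If the right evaluation of `g` vanishes
it gives `Υ^{X^m g} = A^m Υ^g`, and so
`Υ^{p g} = ∑_m A^m Υ^{p_m g} = ∑_{i,j} A^i (∑_m A^m v p_m) g_{i+j+1} u B^j`.  This is zero when
the left evaluation of `p` also vanishes (`tsEval_mul_eq_zero`).  Companion matrices annihilate
their own polynomial in this sense (`leftEval_Cl`, `rightEval_Cr`), so `Υ^{p h q} = 0`.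

In the forward direction, every entry of `Υ^f` on the antidiagonal `i + j = deg f - 1`
(indices from `0`) is the leading coefficient of `f` (`tsEval_entry_eq_leadingCoeff`), and this
antidiagonal meets the `n × k` matrix when `1 ≤ deg f < n + k`.  Hence `Υ^f = 0`
forces `f` to be constant or `deg f ≥ n + k`, and in the latter case subtracting a suitable `p (c X^m) q` lowers the degree while keeping
`Υ^f = 0`.
-/

open Polynomial Matrix Finset

section Helpers

variable {F : Type*} [DivisionRing F] {n k : ℕ}

lemma oneByOne_zero : oneByOne (0 : F) = 0 := by
  ext; simp [oneByOne]

lemma oneByOne_one : oneByOne (1 : F) = 1 := by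
  ext i j; simp [oneByOne, Matrix.one_apply, Subsingleton.elim i j]

lemma oneByOne_add (a b : F) : oneByOne (a + b) = oneByOne a + oneByOne b := by
  ext; simp [oneByOne]

lemma oneByOne_mul_s17 (a b : F) : oneByOne (a * b) = oneByOne a * oneByOne b := by
  ext; simp [oneByOne, Matrix.mul_apply]

/-! ### Truncation bounds and additivity -/

/-- The summation bounds in `tsEval` may be replaced by any larger ones, even distinct. -/
lemma tsEval_eq (A : Matrix (Fin n) (Fin n) F) (B : Matrix (Fin k) (Fin k) F)
    (v : Matrix (Fin n) (Fin 1) F) (u : Matrix (Fin 1) (Fin k) F) (f : F[X]) {M N : ℕ}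
    (hM : f.natDegree ≤ M) (hN : f.natDegree ≤ N) :
    tsEval A B v u f = ∑ i ∈ range M, ∑ j ∈ range N,
      A ^ i * v * oneByOne (f.coeff (i + j + 1)) * u * B ^ j := by
  unfold tsEval
  have hz : ∀ i j, f.natDegree ≤ i ∨ f.natDegree ≤ j →
      A ^ i * v * oneByOne (f.coeff (i + j + 1)) * u * B ^ j = 0 := by
    intro i j h
    rw [coeff_eq_zero_of_natDegree_lt (by omega), oneByOne_zero]
    simp
  rw [← sum_subset (range_mono hM)]
  · refine sum_congr rfl fun i _ => sum_subset (range_mono hN) fun j _ hj => hz i j ?_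
    simp at hj; omega
  · intro i _ hi
    refine sum_eq_zero fun j _ => hz i j ?_
    simp at hi; omega

lemma rightEval_eq (B : Matrix (Fin k) (Fin k) F) (u : Matrix (Fin 1) (Fin k) F) (f : F[X])
    {N : ℕ} (hN : f.natDegree < N) :
    rightEval u B f = ∑ j ∈ range N, oneByOne (f.coeff j) * u * B ^ j := by
  unfold rightEval
  refine sum_subset (range_mono hN) fun j _ hj => ?_
  rw [coeff_eq_zero_of_natDegree_lt (by simp at hj; omega), oneByOne_zero]
  simp

lemma tsEval_add (A : Matrix (Fin n) (Fin n) F) (B : Matrix (Fin k) (Fin k) F)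
    (v : Matrix (Fin n) (Fin 1) F) (u : Matrix (Fin 1) (Fin k) F) (f g : F[X]) :
    tsEval A B v u (f + g) = tsEval A B v u f + tsEval A B v u g := by
  set N := max f.natDegree g.natDegree with hN
  have h1 : f.natDegree ≤ N := le_max_left _ _
  have h2 : g.natDegree ≤ N := le_max_right _ _
  have h3 : (f + g).natDegree ≤ N := natDegree_add_le _ _
  rw [tsEval_eq A B v u _ h1 h1, tsEval_eq A B v u _ h2 h2, tsEval_eq A B v u _ h3 h3]
  simp only [coeff_add, oneByOne_add, Matrix.mul_add, Matrix.add_mul, sum_add_distrib]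

lemma rightEval_add (B : Matrix (Fin k) (Fin k) F) (u : Matrix (Fin 1) (Fin k) F) (f g : F[X]) :
    rightEval u B (f + g) = rightEval u B f + rightEval u B g := by
  set N := max f.natDegree g.natDegree + 1 with hN
  have h1 : f.natDegree < N := by have := le_max_left f.natDegree g.natDegree; omega
  have h2 : g.natDegree < N := by have := le_max_right f.natDegree g.natDegree; omega
  have h3 : (f + g).natDegree < N := by have := natDegree_add_le f g; omega
  rw [rightEval_eq B u _ h1, rightEval_eq B u _ h2, rightEval_eq B u _ h3]
  simp only [coeff_add, oneByOne_add, Matrix.add_mul, sum_add_distrib]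

lemma tsEval_C (A : Matrix (Fin n) (Fin n) F) (B : Matrix (Fin k) (Fin k) F)
    (v : Matrix (Fin n) (Fin 1) F) (u : Matrix (Fin 1) (Fin k) F) (c : F) :
    tsEval A B v u (C c) = 0 := by
  simp [tsEval]

/-! ### Product rules -/

lemma rightEval_C_mul (B : Matrix (Fin k) (Fin k) F) (u : Matrix (Fin 1) (Fin k) F) (c : F)
    (f : F[X]) : rightEval u B (C c * f) = oneByOne c * rightEval u B f := by
  rw [rightEval_eq B u f (Nat.lt_succ_self _),
    rightEval_eq B u (C c * f) (Nat.lt_succ_of_le (natDegree_C_mul_le c f))]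
  simp only [coeff_C_mul, oneByOne_mul_s17, Matrix.mul_sum, Matrix.mul_assoc]

lemma rightEval_X_mul (B : Matrix (Fin k) (Fin k) F) (u : Matrix (Fin 1) (Fin k) F)
    (f : F[X]) : rightEval u B (X * f) = rightEval u B f * B := by
  have h : (X * f).natDegree < f.natDegree + 1 + 1 := by
    have := natDegree_mul_le (p := X) (q := f)
    rw [natDegree_X] at this
    omega
  rw [rightEval_eq B u f (Nat.lt_succ_self _), rightEval_eq B u (X * f) h, sum_range_succ']
  simp only [coeff_X_mul, coeff_X_mul_zero, oneByOne_zero, Matrix.zero_mul, add_zero,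
    Matrix.sum_mul, pow_succ, Matrix.mul_assoc]

lemma rightEval_mul_eq_zero (B : Matrix (Fin k) (Fin k) F) (u : Matrix (Fin 1) (Fin k) F)
    (h g : F[X]) (hg : rightEval u B g = 0) : rightEval u B (h * g) = 0 := by
  induction h using Polynomial.induction_on' with
  | add a b ha hb => rw [add_mul, rightEval_add, ha, hb, add_zero]
  | monomial m c =>
    rw [← C_mul_X_pow_eq_monomial, mul_assoc, rightEval_C_mul]
    suffices rightEval u B (X ^ m * g) = 0 by rw [this, Matrix.mul_zero]
    induction m with
    | zero => simpa using hg
    | succ m ih => rw [pow_succ', mul_assoc, rightEval_X_mul, ih, Matrix.zero_mul]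

/-- The product rule for the divided difference of `X * f`. -/
lemma tsEval_X_mul (A : Matrix (Fin n) (Fin n) F) (B : Matrix (Fin k) (Fin k) F)
    (v : Matrix (Fin n) (Fin 1) F) (u : Matrix (Fin 1) (Fin k) F) (f : F[X]) :
    tsEval A B v u (X * f) = v * rightEval u B f + A * tsEval A B v u f := by
  have h : (X * f).natDegree ≤ f.natDegree + 1 := by
    have := natDegree_mul_le (p := X) (q := f)
    rw [natDegree_X] at this
    omega
  rw [tsEval_eq A B v u (X * f) h h, tsEval_eq A B v u f le_rfl (Nat.le_succ f.natDegree),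
    rightEval_eq B u f (Nat.lt_succ_self f.natDegree), Nat.succ_eq_add_one]
  generalize f.natDegree = N
  rw [sum_range_succ' _ N, add_comm, Matrix.mul_sum, Matrix.mul_sum]
  refine congrArg₂ (· + ·) (sum_congr rfl fun j _ => ?_) (sum_congr rfl fun i _ => ?_)
  · simp only [pow_zero, Matrix.one_mul, zero_add, coeff_X_mul, Matrix.mul_assoc]
  · rw [Matrix.mul_sum]
    refine sum_congr rfl fun j _ => ?_
    rw [show i + 1 + j + 1 = (i + j + 1) + 1 by omega, coeff_X_mul, pow_succ']
    simp only [Matrix.mul_assoc]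

lemma tsEval_X_pow_mul (A : Matrix (Fin n) (Fin n) F) (B : Matrix (Fin k) (Fin k) F)
    (v : Matrix (Fin n) (Fin 1) F) (u : Matrix (Fin 1) (Fin k) F) (g : F[X])
    (hg : rightEval u B g = 0) (m : ℕ) :
    tsEval A B v u (X ^ m * g) = A ^ m * tsEval A B v u g := by
  induction m with
  | zero => simp
  | succ m ih =>
    rw [pow_succ', mul_assoc, tsEval_X_mul, rightEval_mul_eq_zero _ _ _ _ hg, ih, Matrix.mul_zero,
      zero_add, pow_succ', Matrix.mul_assoc]

lemma tsEval_mul_eq_zero (A : Matrix (Fin n) (Fin n) F) (B : Matrix (Fin k) (Fin k) F)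
    (v : Matrix (Fin n) (Fin 1) F) (u : Matrix (Fin 1) (Fin k) F) (p g : F[X])
    (hp : leftEval A v p = 0) (hg : rightEval u B g = 0) :
    tsEval A B v u (p * g) = 0 := by
  let T : F[X] →+ Matrix (Fin n) (Fin k) F :=
    { toFun := tsEval A B v u
      map_zero' := by simpa using tsEval_C A B v u 0
      map_add' := tsEval_add A B v u }
  have key : ∀ m, tsEval A B v u (C (p.coeff m) * X ^ m * g) =
      ∑ i ∈ range g.natDegree, ∑ j ∈ range g.natDegree,
        A ^ i * (A ^ m * v * oneByOne (p.coeff m)) *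
          (oneByOne (g.coeff (i + j + 1)) * u * B ^ j) := by
    intro m
    have hc : (C (p.coeff m) * g).natDegree ≤ g.natDegree := natDegree_C_mul_le _ _
    rw [← X_pow_mul_C, mul_assoc,
      tsEval_X_pow_mul _ _ _ _ _ (rightEval_mul_eq_zero _ _ _ _ hg), tsEval_eq A B v u _ hc hc]
    simp only [Matrix.mul_sum]
    refine sum_congr rfl fun i _ => sum_congr rfl fun j _ => ?_
    simp only [coeff_C_mul, oneByOne_mul_s17, Matrix.mul_assoc]
    rw [← Matrix.mul_assoc (A ^ m), ← Matrix.mul_assoc (A ^ i), ← pow_add, ← pow_add, add_comm]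
  have hsum : p * g = ∑ m ∈ range (p.natDegree + 1), C (p.coeff m) * X ^ m * g := by
    rw [← sum_mul, ← as_sum_range_C_mul_X_pow]
  have : T (p * g) = 0 := by
    rw [hsum, map_sum]
    change ∑ m ∈ range (p.natDegree + 1), tsEval A B v u (C (p.coeff m) * X ^ m * g) = 0
    simp only [key]
    rw [sum_comm]
    refine sum_eq_zero fun i _ => ?_
    rw [sum_comm]
    refine sum_eq_zero fun j _ => ?_
    rw [← Matrix.sum_mul, ← Matrix.mul_sum]
    change A ^ i * leftEval A v p * _ = 0
    rw [hp, Matrix.mul_zero, Matrix.zero_mul]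
  exact this

/-! ### Powers of companion matrices -/

/-- Below the degree, powers of `Cl` move `e₁` through the standard basis. -/
lemma Cl_pow_e1 (p : F[X]) (m : ℕ) (hm : m < n) (i : Fin n) (c : Fin 1) :
    (Cl n p ^ m * e1 F n) i c = if (i : ℕ) = m then 1 else 0 := by
  induction m generalizing i with
  | zero => simp [e1]
  | succ m ih =>
    rw [pow_succ', Matrix.mul_assoc, Matrix.mul_apply,
      Finset.sum_eq_single (⟨m, by omega⟩ : Fin n)]
    · rw [ih (by omega)]
      simp [Cl, show m ≠ n - 1 by omega]
    · intro b _ hb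
      rw [ih (by omega), if_neg (fun h => hb (Fin.ext h)), mul_zero]
    · simp

lemma Cl_pow_e1_self (hn : 1 ≤ n) (p : F[X]) (i : Fin n) (c : Fin 1) :
    (Cl n p ^ n * e1 F n) i c = -p.coeff i := by
  obtain ⟨m, rfl⟩ : ∃ m, n = m + 1 := ⟨n - 1, by omega⟩
  rw [pow_succ', Matrix.mul_assoc, Matrix.mul_apply,
    Finset.sum_eq_single (⟨m, by omega⟩ : Fin (m + 1))]
  · rw [Cl_pow_e1 p m (by omega)]
    simp [Cl]
  · intro b _ hb
    rw [Cl_pow_e1 p m (by omega), if_neg (fun h => hb (Fin.ext h)), mul_zero]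
  · simp

lemma e1row_Cr_pow (q : F[X]) (m : ℕ) (hm : m < k) (c : Fin 1) (i : Fin k) :
    (e1row F k * Cr k q ^ m) c i = if (i : ℕ) = m then 1 else 0 := by
  induction m generalizing i with
  | zero => simp [e1row]
  | succ m ih =>
    rw [pow_succ, ← Matrix.mul_assoc, Matrix.mul_apply,
      Finset.sum_eq_single (⟨m, by omega⟩ : Fin k)]
    · rw [ih (by omega)]
      simp [Cr, Cl, show m ≠ k - 1 by omega]
    · intro b _ hb
      rw [ih (by omega), if_neg (fun h => hb (Fin.ext h)), zero_mul]
    · simp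

lemma e1row_Cr_pow_self (hk : 1 ≤ k) (q : F[X]) (c : Fin 1) (i : Fin k) :
    (e1row F k * Cr k q ^ k) c i = -q.coeff i := by
  obtain ⟨m, rfl⟩ : ∃ m, k = m + 1 := ⟨k - 1, by omega⟩
  rw [pow_succ, ← Matrix.mul_assoc, Matrix.mul_apply,
    Finset.sum_eq_single (⟨m, by omega⟩ : Fin (m + 1))]
  · rw [e1row_Cr_pow q m (by omega)]
    simp [Cr, Cl]
  · intro b _ hb
    rw [e1row_Cr_pow q m (by omega), if_neg (fun h => hb (Fin.ext h)), zero_mul]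
  · simp

/-- `∑ₘ Aᵐ e₁ pₘ = 0` for the left companion matrix `A` of `p`. -/
lemma leftEval_Cl (hn : 1 ≤ n) (p : F[X]) (hp : p.Monic) (hpd : p.natDegree = n) :
    leftEval (Cl n p) (e1 F n) p = 0 := by
  have hlc : p.coeff n = 1 := by rw [← hpd]; exact hp
  ext i c
  rw [leftEval, hpd, sum_range_succ, hlc, oneByOne_one, Matrix.mul_one, Matrix.add_apply,
    Cl_pow_e1_self hn, Matrix.sum_apply, Finset.sum_eq_single (i : ℕ)]
  · rw [Matrix.mul_apply]
    simp [Cl_pow_e1 p i i.2, oneByOne]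
  · intro m hm hmi
    rw [Matrix.mul_apply]
    simp [Cl_pow_e1 p m (mem_range.1 hm), Ne.symm hmi]
  · simp

/-- `∑ₘ qₘ e₁ᵀ Bᵐ = 0` for the right companion matrix `B` of `q`. -/
lemma rightEval_Cr (hk : 1 ≤ k) (q : F[X]) (hq : q.Monic) (hqd : q.natDegree = k) :
    rightEval (e1row F k) (Cr k q) q = 0 := by
  have hlc : q.coeff k = 1 := by rw [← hqd]; exact hq
  ext c i
  rw [rightEval, hqd, sum_range_succ, hlc, oneByOne_one, Matrix.one_mul, Matrix.add_apply,
    e1row_Cr_pow_self hk, Matrix.sum_apply, Finset.sum_eq_single (i : ℕ)]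
  · rw [Matrix.mul_assoc, Matrix.mul_apply]
    simp [e1row_Cr_pow q i i.2, oneByOne]
  · intro m hm hmi
    rw [Matrix.mul_assoc, Matrix.mul_apply]
    simp [e1row_Cr_pow q m (mem_range.1 hm), Ne.symm hmi]
  · simp

lemma tsEval_p_h_q (hn : 1 ≤ n) (hk : 1 ≤ k) (p q : F[X]) (hp : p.Monic) (hq : q.Monic)
    (hpd : p.natDegree = n) (hqd : q.natDegree = k) (h : F[X]) :
    tsEval (Cl n p) (Cr k q) (e1 F n) (e1row F k) (p * h * q) = 0 := by
  rw [mul_assoc]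
  exact tsEval_mul_eq_zero _ _ _ _ _ _ (leftEval_Cl hn p hp hpd)
    (rightEval_mul_eq_zero _ _ _ _ (rightEval_Cr hk q hq hqd))

/-! ### The leading coefficient as an entry -/

lemma term_apply (A : Matrix (Fin n) (Fin n) F) (B : Matrix (Fin k) (Fin k) F)
    (v : Matrix (Fin n) (Fin 1) F) (u : Matrix (Fin 1) (Fin k) F) (c : F) (a b : ℕ)
    (r : Fin n) (s : Fin k) :
    (A ^ a * v * oneByOne c * u * B ^ b) r s = (A ^ a * v) r 0 * c * (u * B ^ b) 0 s := by
  rw [Matrix.mul_assoc _ u, Matrix.mul_apply]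
  simp [Matrix.mul_apply (M := A ^ a * v), oneByOne]

/-- On the antidiagonal `i + j = deg f - 1` no term other than `(a, b) = (i, j)` contributes to the
entry `(i, j)`: since `a + b ≤ i + j`, one has `a < i` or `b < j` or `(a, b) = (i, j)`, and below
the degree the powers of the companion matrices only produce the corresponding basis vectors. -/
lemma tsEval_entry_eq_leadingCoeff (p q f : F[X]) (i : Fin n) (j : Fin k)
    (hij : (i : ℕ) + j + 1 = f.natDegree) :
    tsEval (Cl n p) (Cr k q) (e1 F n) (e1row F k) f i j = f.leadingCoeff := by
  have hi2 := i.2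
  have hj2 := j.2
  rw [tsEval, Matrix.sum_apply]
  simp only [Matrix.sum_apply, term_apply]
  rw [Finset.sum_eq_single (i : ℕ), Finset.sum_eq_single (j : ℕ)]
  · simp [Cl_pow_e1 p i i.2, e1row_Cr_pow q j j.2, hij]
  · intro b _ hb
    rcases lt_or_gt_of_ne hb with hlt | hgt
    · simp [e1row_Cr_pow (k := k) q b (by omega), hb.symm]
    · rw [coeff_eq_zero_of_natDegree_lt (by omega)]
      simp
  · intro h; simp at h; omega
  · intro a _ ha
    refine sum_eq_zero fun b _ => ?_
    by_cases han : a < n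
    · simp [Cl_pow_e1 p a han, ha.symm]
    -- If `a ≥ n > i`, only `b < j` is left, where `e₁ᵀ Bᵇ` is a basis vector other than `eⱼᵀ`.
    · by_cases hb : b < j
      · simp [e1row_Cr_pow (k := k) q b (by omega), show (j : ℕ) ≠ b by omega]
      · rw [coeff_eq_zero_of_natDegree_lt (by omega)]
        simp
  · intro h; simp at h; omega

end Helpers

/-- Remark `R:twos`: for monic `p, q` of degrees `n, k`, the two-sided
evaluation `Υ^f = (e₁ f e₁ᵀ)^{ts}(C_ℓ(p), C_r(q))` vanishes if and only if
`f = α + p·h·q` for some `α ∈ F` and `h ∈ F[z]`. -/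
theorem statement17 {F : Type*} [DivisionRing F] {n k : ℕ} (hn : 1 ≤ n) (hk : 1 ≤ k)
    (p q : F[X]) (hp : p.Monic) (hq : q.Monic)
    (hpd : p.natDegree = n) (hqd : q.natDegree = k) (f : F[X]) :
    tsEval (Cl n p) (Cr k q) (e1 F n) (e1row F k) f = 0 ↔
      ∃ (α : F) (h : F[X]), f = Polynomial.C α + p * h * q := by
  constructor
  · intro hf
    induction hd : f.natDegree using Nat.strong_induction_on generalizing f with
    | _ d ih =>
    rcases Nat.eq_zero_or_pos d with h0 | hpos
    · refine ⟨f.coeff 0, 0, ?_⟩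
      rw [mul_zero, zero_mul, add_zero]
      exact eq_C_of_natDegree_eq_zero (hd.trans h0)
    have hf0 : f ≠ 0 := by
      rintro rfl
      simp at hd
      omega
    rcases lt_or_ge d (n + k) with hlt | hge
    · exfalso
      have := tsEval_entry_eq_leadingCoeff p q f
        (⟨min (d - 1) (n - 1), by omega⟩ : Fin n) (⟨d - 1 - min (d - 1) (n - 1), by omega⟩ : Fin k)
        (by simp only [hd]; omega)
      rw [hf] at this
      exact hf0 (leadingCoeff_eq_zero.1 this.symm)
    · set m : F[X] := C f.leadingCoeff * X ^ (d - n - k) with hm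
      have hc : f.leadingCoeff ≠ 0 := leadingCoeff_ne_zero.2 hf0
      have hmd : m.natDegree = d - n - k := natDegree_C_mul_X_pow _ _ hc
      have hm0 : m ≠ 0 := by simp [hm, hc]
      have hpm : p * m ≠ 0 := mul_ne_zero hp.ne_zero hm0
      have hpmq : p * m * q ≠ 0 := mul_ne_zero hpm hq.ne_zero
      have hdeg : (p * m * q).natDegree = f.natDegree := by
        rw [natDegree_mul hpm hq.ne_zero, natDegree_mul hp.ne_zero hm0, hpd, hqd, hmd, hd]
        omega
      have hlead : (p * m * q).leadingCoeff = f.leadingCoeff := by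
        rw [leadingCoeff_mul, leadingCoeff_mul, hp.leadingCoeff, hq.leadingCoeff, hm,
          leadingCoeff_C_mul_X_pow, one_mul, mul_one]
      have hlt : (f - p * m * q).natDegree < d := by
        have h1 : (f - p * m * q).degree < f.degree := degree_sub_lt_left
          (by rw [degree_eq_natDegree hf0, degree_eq_natDegree hpmq, hdeg]) hf0 hlead.symm
        by_cases hz : f - p * m * q = 0
        · rw [hz, natDegree_zero]; exact hpos
        · rw [← hd]; exact natDegree_lt_natDegree hz h1
      have hz : tsEval (Cl n p) (Cr k q) (e1 F n) (e1row F k) (f - p * m * q) = 0 := by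
        have h2 := tsEval_add (Cl n p) (Cr k q) (e1 F n) (e1row F k) (f - p * m * q) (p * m * q)
        rw [sub_add_cancel, hf, tsEval_p_h_q hn hk p q hp hq hpd hqd, add_zero] at h2
        exact h2.symm
      obtain ⟨α, h, hh⟩ := ih _ hlt _ hz rfl
      refine ⟨α, h + m, ?_⟩
      rw [mul_add, add_mul, ← add_assoc, ← hh, sub_add_cancel]
  · rintro ⟨α, h, rfl⟩
    rw [tsEval_add, tsEval_C, tsEval_p_h_q hn hk p q hp hq hpd hqd, add_zero]
end
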